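/- arXiv:math/0605252 — 8 statements merged into one kernel-verified Lean document; each statement's English description precedes it below -/
import Mathlib

section
/- Let q = p^R with p prime, let k be a divisor of q-1 with k ≥ 2 such that q is even or (q-1)/k is even, and let S be the unique subgroup of order (q-1)/k of the multiplicative group 𝔽_q^*. Then the generalised Paley graph GPaley(q,(q-1)/k) is connected if and only if k is not a multiple of (q-1)/(p^a-1) for any proper divisor a of R (i.e., a ∣ R, 1 ≤ a < R). -/
/-!
The graph `gpaley (unitsSet S)` is a Cayley graph of the additive group of `F`, so it is connected
iff `S` generates `F` additively (`gpaley_connected_iff_closure`). Since `S` is closed under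
multiplication, its additive span is a subring of the finite field `F`, hence a subfield.

With `n = (p ^ R - 1) / k` the order of `S`, the divisibility `(p ^ R - 1) / (p ^ a - 1) ∣ k` says
exactly that `n ∣ p ^ a - 1` (`div_dvd_iff_dvd_of_mul`). If this holds for some proper divisor `a`
of `R`, every element of `S` is fixed by the `a`-th power of Frobenius, hence so is the additive
span of `S`, which is therefore not all of `F`. Conversely, if the span is a proper subfield,
then its order is `p ^ a` for a proper divisor `a` of `R`, and `S` is a subgroup of its unit group,
of order `p ^ a - 1`.
-/

/-- The generalised Paley graph on a field `F` with connecting set `S`: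
vertices `x, y` are adjacent iff `x ≠ y` and `x - y ∈ S` (the relation being
symmetrised; it is already symmetric when `-1 • S = S`). -/
def gpaley {F : Type*} [Field F] (S : Set F) : SimpleGraph F :=
  SimpleGraph.fromRel (fun x y => x - y ∈ S)

/-- The image in `F` of a subgroup `S` of the unit group `Fˣ`. -/
def unitsSet {F : Type*} [Field F] (S : Subgroup Fˣ) : Set F :=
  (fun u : Fˣ => (u : F)) '' (S : Set Fˣ)

theorem gpaley_reachable_of_mem_closure {F : Type*} [Field F] (S : Subgroup Fˣ) {d : F}
    (hd : d ∈ AddSubgroup.closure (unitsSet S)) :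
    ∀ x : F, (gpaley (unitsSet S)).Reachable (x + d) x := by
  induction hd using AddSubgroup.closure_induction with
  | mem d hd =>
    intro x
    apply SimpleGraph.Adj.reachable
    have hd0 : d ≠ 0 := by
      obtain ⟨u, -, rfl⟩ := hd
      exact u.ne_zero
    simp only [gpaley, SimpleGraph.fromRel_adj]
    exact ⟨by simpa using hd0, Or.inl (by simpa using hd)⟩
  | zero => intro x; simp
  | add a b _ _ iha ihb =>
    intro x
    have := ihb (x + a)
    rw [← add_assoc]
    exact this.trans (iha x)
  | neg a _ ih =>
    intro x
    have := ih (x + -a)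
    rw [neg_add_cancel_right] at this
    exact this.symm

theorem gpaley_connected_iff_closure {F : Type*} [Field F] (S : Subgroup Fˣ) :
    (gpaley (unitsSet S)).Connected ↔ AddSubgroup.closure (unitsSet S) = ⊤ := by
  constructor
  · intro h
    rw [AddSubgroup.eq_top_iff']
    intro x
    obtain ⟨w⟩ := h.preconnected x 0
    have key : ∀ {y z : F}, (gpaley (unitsSet S)).Walk y z →
        y - z ∈ AddSubgroup.closure (unitsSet S) := by
      intro y z w
      induction w with
      | nil => simp
      | @cons u v t huv _ ih =>
        have huv' : u - v ∈ AddSubgroup.closure (unitsSet S) := by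
          simp only [gpaley, SimpleGraph.fromRel_adj] at huv
          rcases huv.2 with h | h
          · exact AddSubgroup.subset_closure h
          · rw [← neg_sub]
            exact neg_mem (AddSubgroup.subset_closure h)
        have := add_mem huv' ih
        rwa [sub_add_sub_cancel] at this
    simpa using key w
  · intro h
    have : Nonempty F := ⟨0⟩
    refine ⟨fun x y => ?_⟩
    have := gpaley_reachable_of_mem_closure S (d := x - y) (by rw [h]; trivial) y
    rwa [add_sub_cancel] at this

/-- The additive span of a subgroup of `Fˣ`, for `F` a finite field, is a subfield: it is closed
under products because the subgroup is, and under inverses because `x⁻¹` is a power of `x`. -/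
theorem exists_subfield_eq_closure {F : Type*} [Field F] [Fintype F] (S : Subgroup Fˣ) :
    ∃ K : Subfield F, ∀ x, x ∈ K ↔ x ∈ AddSubgroup.closure (unitsSet S) := by
  have hset : ((S.toSubmonoid.map (Units.coeHom F) : Submonoid F) : Set F) = unitsSet S := rfl
  have hcl : Submonoid.closure (unitsSet S) = S.toSubmonoid.map (Units.coeHom F) := by
    rw [← hset, Submonoid.closure_eq]
  refine ⟨{ Subring.closure (unitsSet S) with inv_mem' := ?_ }, fun x => ?_⟩
  · intro x hx
    change x ∈ Subring.closure (unitsSet S) at hx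
    change x⁻¹ ∈ Subring.closure (unitsSet S)
    by_cases h0 : x = 0
    · simp [h0]
    · have h2 : 1 < Fintype.card F := Fintype.one_lt_card
      have : x⁻¹ = x ^ (Fintype.card F - 2) := by
        apply inv_eq_of_mul_eq_one_right
        rw [← pow_succ', show Fintype.card F - 2 + 1 = Fintype.card F - 1 by omega]
        exact FiniteField.pow_card_sub_one_eq_one x h0
      rw [this]
      exact pow_mem hx _
  · change x ∈ Subring.closure (unitsSet S) ↔ _
    rw [Subring.mem_closure_iff, hcl, hset]

theorem div_dvd_iff_dvd_of_mul {N k m : ℕ} (hN : 0 < N) (hk : k ∣ N) (hm : m ∣ N) :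
    N / m ∣ k ↔ N / k ∣ m := by
  rw [Nat.div_dvd_iff_dvd_mul hm (Nat.pos_of_dvd_of_pos hm hN),
    Nat.div_dvd_iff_dvd_mul hk (Nat.pos_of_dvd_of_pos hk hN), mul_comm]

/-- If `|S|` divides `p ^ a - 1`, the additive span of `S` lies in the fixed field of the `a`-th
power of Frobenius. -/
theorem pow_eq_self_of_mem_closure {F : Type*} [Field F] {p a : ℕ} [ExpChar F p]
    (S : Subgroup Fˣ) (hpa : 1 ≤ p ^ a) (hS : Nat.card S ∣ p ^ a - 1) {x : F}
    (hx : x ∈ AddSubgroup.closure (unitsSet S)) : x ^ p ^ a = x := by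
  have hle : AddSubgroup.closure (unitsSet S) ≤
      (iterateFrobenius F p a : F →+ F).eqLocus (AddMonoidHom.id F) := by
    rw [AddSubgroup.closure_le]
    rintro _ ⟨u, hu, rfl⟩
    change iterateFrobenius F p a (u : F) = u
    rw [iterateFrobenius_def]
    have h1 : u ^ (p ^ a - 1) = 1 := by
      obtain ⟨c, hc⟩ := hS
      rw [hc, pow_mul]
      have : (⟨u, hu⟩ : S) ^ Nat.card S = 1 := pow_card_eq_one'
      have := congrArg Subtype.val this
      simp only [Subgroup.coe_pow, Subgroup.coe_one] at this
      rw [this, one_pow]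
    have h2 : u ^ p ^ a = u := by
      rw [← Nat.sub_add_cancel hpa, pow_succ, h1, one_mul]
    exact_mod_cast congrArg Units.val h2
  have := hle hx
  change iterateFrobenius F p a x = x at this
  rwa [iterateFrobenius_def] at this

theorem gpaley_connected_iff {F : Type*} [Field F] [Fintype F]
    (p R k : ℕ) (hp : p.Prime) (hR : 1 ≤ R) (hq : Fintype.card F = p ^ R)
    (hk : k ∣ p ^ R - 1) (hk2 : 2 ≤ k)
    (heven : Even (p ^ R) ∨ Even ((p ^ R - 1) / k))
    (S : Subgroup Fˣ) (hS : Nat.card S = (p ^ R - 1) / k) :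
    (gpaley (unitsSet S)).Connected ↔
      ¬ ∃ a : ℕ, a ∣ R ∧ 1 ≤ a ∧ a < R ∧ (p ^ R - 1) / (p ^ a - 1) ∣ k := by
  have hN : 0 < p ^ R - 1 := Nat.sub_pos_of_lt (Nat.one_lt_pow (by omega) hp.one_lt)
  rw [gpaley_connected_iff_closure]
  constructor
  · rintro htop ⟨a, haR, ha1, haR', hdvd⟩
    rw [div_dvd_iff_dvd_of_mul hN hk (Nat.pow_sub_one_dvd_pow_sub_one p haR), ← hS] at hdvd
    have : Fact p.Prime := ⟨hp⟩
    have : CharP F p := charP_of_card_eq_prime_pow hq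
    have h1a : 1 < p ^ a := Nat.one_lt_pow (by omega) hp.one_lt
    -- A generator of `Fˣ` has order `p ^ R - 1`, too large to be fixed by `x ↦ x ^ p ^ a`.
    obtain ⟨g, hg⟩ := IsCyclic.exists_generator (α := Fˣ)
    have hgo : orderOf g = p ^ R - 1 := by
      rw [orderOf_eq_card_of_forall_mem_zpowers hg, Nat.card_units, Nat.card_eq_fintype_card, hq]
    have hfix : (g : F) ^ p ^ a = g :=
      pow_eq_self_of_mem_closure S h1a.le hdvd (by rw [htop]; trivial)
    have hg1 : g ^ (p ^ a - 1) = 1 := by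
      have h2 : g ^ p ^ a = g := Units.ext (by exact_mod_cast hfix)
      rw [← Nat.sub_add_cancel h1a.le, pow_succ] at h2
      exact mul_eq_right.mp h2
    have hle := Nat.le_of_dvd (by omega) (orderOf_dvd_of_pow_eq_one hg1)
    have hlt : p ^ a < p ^ R := Nat.pow_lt_pow_right hp.one_lt haR'
    omega
  · intro h
    by_contra hne
    apply h
    obtain ⟨K, hK⟩ := exists_subfield_eq_closure S
    have hpow : p ^ R = Nat.card K ^ Module.finrank K F := by
      rw [← hq, ← Nat.card_eq_fintype_card]
      exact Module.natCard_eq_pow_finrank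
    have hfr : 0 < Module.finrank K F := Module.finrank_pos
    obtain ⟨a, -, ha⟩ := (Nat.dvd_prime_pow hp).mp
      (hpow ▸ dvd_pow_self (Nat.card K) hfr.ne')
    rw [ha, ← pow_mul] at hpow
    have hRa : R = a * Module.finrank K F := Nat.pow_right_injective hp.two_le hpow
    have haR : a ∣ R := ⟨_, hRa⟩
    refine ⟨a, haR, Nat.pos_of_dvd_of_pos haR hR, ?_, ?_⟩
    · refine lt_of_le_of_ne (Nat.le_of_dvd hR haR) ?_
      rintro rfl
      apply hne
      have hKtop : (K : Set F) = Set.univ := by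
        apply Set.eq_of_subset_of_ncard_le (Set.subset_univ _)
        rw [Set.ncard_univ, Nat.card_eq_fintype_card, hq, ← ha]
        exact le_of_eq (Nat.card_coe_set_eq _)
      rw [AddSubgroup.eq_top_iff']
      intro x
      rw [← hK, ← SetLike.mem_coe, hKtop]
      exact Set.mem_univ x
    · rw [div_dvd_iff_dvd_of_mul hN hk (Nat.pow_sub_one_dvd_pow_sub_one p haR), ← hS, ← ha,
        ← Nat.card_units]
      -- `S` lies in the image of `Kˣ` in `Fˣ`.
      have hle : S ≤ (Units.map (K.subtype : K →* F)).range := by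
        intro u hu
        have huK : (u : F) ∈ K := (hK _).mpr (AddSubgroup.subset_closure ⟨u, hu, rfl⟩)
        refine ⟨Units.mk0 ⟨u, huK⟩ fun h0 => u.ne_zero (congrArg Subtype.val h0), ?_⟩
        ext
        rfl
      exact (Subgroup.card_dvd_of_le hle).trans (Subgroup.card_range_dvd _)
end

section
/- Let q = p^R with p prime, let k be a divisor of q-1 with k ≥ 2 such that q is even or (q-1)/k is even, let ω be a primitive element (generator of 𝔽_q^*), and let S = ⟨ω^k⟩ be the unique subgroup of order (q-1)/k of 𝔽_q^*. Then GPaley(q,(q-1)/k) is connected if and only if the 𝔽_p-linear map x ↦ ω^k·x acts irreducibly on 𝔽_q viewed as an 𝔽_p-vector space, i.e., the only subgroups of (𝔽_q,+) closed under scalar multiplication by 𝔽_p and invariant under multiplication by ω^k are {0} and 𝔽_q. -/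
/-- The set of translations that keep every vertex of `gpaley S` inside its connected component. -/
def gpaleyReach {F : Type*} [Field F] (S : Set F) : AddSubgroup F where
  carrier := {x | ∀ y, (gpaley S).Reachable y (y + x)}
  zero_mem' := fun y => by rw [add_zero]
  add_mem' := fun {a b} ha hb y => by
    rw [← add_assoc]
    exact (ha y).trans (hb (y + a))
  neg_mem' := fun {a} ha y => by
    have h := ha (y + -a)
    rw [neg_add_cancel_right] at h
    exact h.symm

theorem subset_gpaleyReach {F : Type*} [Field F] (S : Set F) :
    S ⊆ gpaleyReach S := by
  intro s hs y
  by_cases h0 : s = 0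
  · rw [h0, add_zero]
  · apply SimpleGraph.Adj.reachable
    rw [gpaley, SimpleGraph.fromRel_adj]
    refine ⟨fun h => h0 (by simpa using h), Or.inr ?_⟩
    simpa using hs

theorem gpaley_reachable_sub_mem {F : Type*} [Field F] (S : Set F) (W : AddSubgroup F)
    (hS : S ⊆ W) {x y : F} (h : (gpaley S).Reachable x y) : x - y ∈ W := by
  obtain ⟨w⟩ := h
  induction w with
  | nil => simp
  | @cons a b c hab _ ih =>
    rw [gpaley, SimpleGraph.fromRel_adj] at hab
    have h1 : a - b ∈ W := by
      rcases hab.2 with h | h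
      · exact hS h
      · rw [← neg_sub]
        exact W.neg_mem (hS h)
    simpa using W.add_mem h1 ih

theorem gpaley_connected_iff_s1 {F : Type*} [Field F] (S : Set F) :
    (gpaley S).Connected ↔ ∀ W : AddSubgroup F, S ⊆ W → W = ⊤ := by
  constructor
  · intro h W hW
    refine (AddSubgroup.eq_top_iff' W).2 fun x => ?_
    simpa using gpaley_reachable_sub_mem S W hW (h.preconnected x 0)
  · intro h
    have htop := h _ (subset_gpaleyReach S)
    refine SimpleGraph.Connected.mk fun x y => ?_
    have hm : y - x ∈ gpaleyReach S := htop ▸ AddSubgroup.mem_top _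
    have h2 := hm x
    rwa [add_sub_cancel] at h2

theorem mem_unitsSet_zpowers {F : Type*} [Field F] [Finite F] (a : Fˣ) (x : F) :
    x ∈ unitsSet (Subgroup.zpowers a) ↔ ∃ n : ℕ, (a : F) ^ n = x := by
  constructor
  · rintro ⟨u, hu, rfl⟩
    -- In a finite group every integer power of `a` is a natural power.
    obtain ⟨n, rfl⟩ := mem_powers_iff_mem_zpowers.2 hu
    exact ⟨n, by simp⟩
  · rintro ⟨n, rfl⟩
    exact ⟨a ^ n, Subgroup.npow_mem_zpowers a n, by simp⟩

/-- GPaley(q,(q-1)/k) is connected iff multiplication by `ω ^ k` acts irreducibly on `F`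
viewed as a vector space over the prime field `𝔽ₚ = ZMod p`: the only `𝔽ₚ`-subspaces of `F`
invariant under multiplication by `ω ^ k` are `⊥` and `⊤`. -/
theorem gpaley_connected_iff_irreducible {F : Type*} [Field F] [Fintype F]
    (p R k : ℕ) (hp : p.Prime) [Algebra (ZMod p) F]
    (hR : 1 ≤ R) (hq : Fintype.card F = p ^ R)
    (hk : k ∣ p ^ R - 1) (hk2 : 2 ≤ k)
    (heven : Even (p ^ R) ∨ Even ((p ^ R - 1) / k))
    (ω : Fˣ) (hω : Subgroup.zpowers ω = ⊤) :
    (gpaley (unitsSet (Subgroup.zpowers (ω ^ k)))).Connected ↔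
      ∀ U : Submodule (ZMod p) F, (∀ x ∈ U, ((ω : F) ^ k) * x ∈ U) → U = ⊥ ∨ U = ⊤ := by
  rw [gpaley_connected_iff_s1]
  constructor
  · intro h U hU
    refine or_iff_not_imp_left.2 fun hne => ?_
    obtain ⟨u, hu, hu0⟩ := U.exists_mem_ne_zero_of_ne_bot hne
    have htop := h (U.toAddSubgroup.comap (AddMonoidHom.mulRight u)) (by
      intro s hs
      obtain ⟨n, rfl⟩ := (mem_unitsSet_zpowers _ _).1 hs
      change ((ω ^ k : Fˣ) : F) ^ n * u ∈ U
      induction n with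
      | zero => simpa using hu
      | succ n ih =>
        have h3 := hU _ (ih ((mem_unitsSet_zpowers _ _).2 ⟨n, rfl⟩))
        rw [pow_succ', mul_assoc]
        simpa using h3)
    refine (Submodule.eq_top_iff').2 fun x => ?_
    have hx : x * u⁻¹ ∈ U.toAddSubgroup.comap (AddMonoidHom.mulRight u) :=
      htop ▸ AddSubgroup.mem_top _
    have hx2 : x * u⁻¹ * u ∈ U := hx
    rwa [inv_mul_cancel_right₀ hu0] at hx2
  · intro h W hW
    set S := unitsSet (Subgroup.zpowers (ω ^ k)) with hS
    have hspan : Submodule.span (ZMod p) S = ⊤ := by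
      refine (h _ ?_).resolve_left ?_
      · intro x hx
        induction hx using Submodule.span_induction with
        | mem x hx =>
          obtain ⟨n, rfl⟩ := (mem_unitsSet_zpowers _ _).1 hx
          refine Submodule.subset_span ((mem_unitsSet_zpowers _ _).2 ⟨n + 1, ?_⟩)
          rw [pow_succ', Units.val_pow_eq_pow_val]
        | zero => simp
        | add x y _ _ hx hy =>
          rw [mul_add]
          exact Submodule.add_mem _ hx hy
        | smul c x _ hx =>
          rw [mul_smul_comm]
          exact Submodule.smul_mem _ c hx
      · intro hbot
        have h1 : (1 : F) ∈ Submodule.span (ZMod p) S :=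
          Submodule.subset_span ((mem_unitsSet_zpowers _ _).2 ⟨0, pow_zero _⟩)
        rw [hbot, Submodule.mem_bot] at h1
        exact one_ne_zero h1
    refine (AddSubgroup.eq_top_iff' W).2 fun x => ?_
    have hx : x ∈ Submodule.span (ZMod p) S := hspan ▸ Submodule.mem_top
    exact (Submodule.span_le (p := AddSubgroup.toZModSubmodule p W)).2 hW hx
end

section
/- Let q = p^R with p prime, let k be a divisor of q-1 with k ≥ 2, and let ω be a primitive element of 𝔽_q. Then the 𝔽_p-linear map x ↦ ω^k·x acts irreducibly on 𝔽_q (viewed as an 𝔽_p-vector space) if and only if k is not a multiple of (q-1)/(p^a-1) for any proper divisor a of R. -/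
/-!
Write `β = ω ^ k`. An invariant subspace is stable under the subfield `𝔽ₚ(β)`, so a nontrivial
invariant subspace exists exactly when `𝔽ₚ(β)` is a proper subfield. Since the proper subfields
of `F` are the fixed sets of `x ↦ x ^ (p ^ a)` for proper divisors `a` of `R`, this happens
exactly when `β ^ (p ^ a - 1) = 1` for such an `a`, i.e. (as `ω` has order `p ^ R - 1`) when
`p ^ R - 1 ∣ k * (p ^ a - 1)`, which is divisibility of `k` by `(p ^ R - 1) / (p ^ a - 1)`.
-/

/-- The fixed set of `x ↦ x ^ (p ^ a)`, as an `𝔽ₚ`-subspace. -/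
def frobeniusFixed (F : Type*) [Field F] (p a : ℕ) [Fact p.Prime] [Algebra (ZMod p) F] :
    Submodule (ZMod p) F where
  carrier := {x | x ^ p ^ a = x}
  add_mem' {x y} hx hy := by
    have : CharP F p := charP_of_injective_algebraMap (algebraMap (ZMod p) F).injective p
    simp only [Set.mem_ofPred_eq] at *
    rw [add_pow_char_pow, hx, hy]
  zero_mem' := by
    simp [(Fact.out : p.Prime).ne_zero]
  smul_mem' c x hx := by
    simp only [Set.mem_ofPred_eq] at *
    rw [Algebra.smul_def, mul_pow, hx, ← map_pow, ZMod.pow_card_pow]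

/-- Such a `U` is stable under all of `K[β] = F`, hence is an ideal of the field `F`. -/
lemma eq_bot_or_top_of_adjoin_eq_top {K F : Type*} [Field K] [Field F] [Algebra K F] (β : F)
    (hβ : Algebra.adjoin K {β} = ⊤) (U : Submodule K F) (hU : ∀ x ∈ U, β * x ∈ U) :
    U = ⊥ ∨ U = ⊤ := by
  have hstable : ∀ c : F, ∀ x ∈ U, c * x ∈ U := by
    intro c
    have hc : c ∈ Algebra.adjoin K {β} := hβ ▸ Algebra.mem_top
    induction hc using Algebra.adjoin_induction with
    | mem y hy => rw [Set.mem_singleton_iff.1 hy]; exact hU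
    | algebraMap r => intro x hx; rw [← Algebra.smul_def]; exact U.smul_mem r hx
    | add y z _ _ hy hz => intro x hx; rw [add_mul]; exact U.add_mem (hy x hx) (hz x hx)
    | mul y z _ _ hy hz => intro x hx; rw [mul_assoc]; exact hy _ (hz x hx)
  by_cases hbot : U = ⊥
  · exact Or.inl hbot
  · obtain ⟨u, hu, hu0⟩ := U.ne_bot_iff.1 hbot
    refine Or.inr (eq_top_iff.2 fun y _ => ?_)
    have := hstable (y * u⁻¹) u hu
    rwa [inv_mul_cancel_right₀ hu0] at this

/-- Multiplication by `ω ^ k` acts irreducibly on `F` viewed as a vector space over the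
prime field `𝔽ₚ = ZMod p` (i.e. the only invariant `𝔽ₚ`-subspaces are `⊥` and `⊤`) iff
`k` is not a multiple of `(q-1)/(pᵃ-1)` for any proper divisor `a` of `R`. -/
theorem irreducible_iff_not_multiple {F : Type*} [Field F] [Fintype F]
    (p R k : ℕ) (hp : p.Prime) [Algebra (ZMod p) F]
    (hR : 1 ≤ R) (hq : Fintype.card F = p ^ R)
    (hk : k ∣ p ^ R - 1) (hk2 : 2 ≤ k)
    (ω : Fˣ) (hω : Subgroup.zpowers ω = ⊤) :
    (∀ U : Submodule (ZMod p) F, (∀ x ∈ U, ((ω : F) ^ k) * x ∈ U) → U = ⊥ ∨ U = ⊤) ↔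
      ¬ ∃ a : ℕ, a ∣ R ∧ 1 ≤ a ∧ a < R ∧ (p ^ R - 1) / (p ^ a - 1) ∣ k := by
  have : Fact p.Prime := ⟨hp⟩
  have hord : orderOf ω = p ^ R - 1 := by
    rw [orderOf_eq_card_of_forall_mem_zpowers (fun x => hω ▸ Subgroup.mem_top x),
      Nat.card_units, Nat.card_eq_fintype_card, hq]
  have hpos : ∀ a, 1 ≤ a → 0 < p ^ a - 1 := fun a ha =>
    Nat.sub_pos_of_lt (Nat.one_lt_pow (by omega) hp.one_lt)
  -- Cancelling `ω ^ m`, the fixed-point equation says `ω ^ (m * (p ^ a - 1)) = 1`.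
  have hfix : ∀ a m, ((ω : F) ^ m) ^ p ^ a = (ω : F) ^ m ↔ p ^ R - 1 ∣ m * (p ^ a - 1) := by
    intro a m
    have h1 : p ^ a = (p ^ a - 1) + 1 := (Nat.sub_add_cancel (Nat.pow_pos hp.pos)).symm
    rw [← hord, orderOf_dvd_iff_pow_eq_one, ← Units.val_inj, Units.val_pow_eq_pow_val,
      Units.val_one, pow_mul]
    conv_lhs => rw [h1, pow_succ]
    exact mul_eq_right₀ (pow_ne_zero _ ω.ne_zero)
  have hdiv : ∀ a, a ∣ R → 1 ≤ a →
      ((p ^ R - 1) / (p ^ a - 1) ∣ k ↔ p ^ R - 1 ∣ k * (p ^ a - 1)) := by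
    intro a ha ha1
    rw [mul_comm]
    exact Nat.div_dvd_iff_dvd_mul (Nat.pow_sub_one_dvd_pow_sub_one p ha) (hpos a ha1)
  constructor
  · rintro hirr ⟨a, haR, ha1, haltR, hdvd⟩
    have hβ := (hfix a k).2 ((hdiv a haR ha1).1 hdvd)
    rcases hirr (frobeniusFixed F p a) (fun x (hx : x ^ p ^ a = x) =>
      show (_ * x) ^ p ^ a = _ * x by rw [mul_pow, hβ, hx]) with h | h
    · have h1 : (1 : F) ∈ frobeniusFixed F p a := one_pow (p ^ a)
      rw [h, Submodule.mem_bot] at h1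
      exact one_ne_zero h1
    · have h1 : (ω : F) ∈ frobeniusFixed F p a := h ▸ Submodule.mem_top
      have h2 := (hfix a 1).1 (by rw [pow_one]; exact h1)
      rw [one_mul] at h2
      have h3 := Nat.le_of_dvd (hpos a ha1) h2
      have h4 := Nat.pow_lt_pow_right hp.one_lt haltR
      have := hpos a ha1
      omega
  · intro hno U hU
    by_cases htop : Algebra.adjoin (ZMod p) {(ω : F) ^ k} = ⊤
    · exact eq_bot_or_top_of_adjoin_eq_top _ htop U hU
    · exfalso
      have hint : IsIntegral (ZMod p) ((ω : F) ^ k) := Algebra.IsIntegral.isIntegral _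
      set L := IntermediateField.adjoin (ZMod p) {(ω : F) ^ k} with hL
      have hLtop : L ≠ ⊤ := fun h => htop (by
        rw [← IntermediateField.adjoin_simple_toSubalgebra_of_isAlgebraic hint.isAlgebraic, ← hL, h,
          IntermediateField.top_toSubalgebra])
      have hfinF : Module.finrank (ZMod p) F = R := by
        have h := Module.card_eq_pow_finrank (K := ZMod p) (V := F)
        rw [hq, ZMod.card] at h
        exact (Nat.pow_right_injective hp.two_le h).symm
      have hmul := Module.finrank_mul_finrank (ZMod p) L F
      have haR : Module.finrank (ZMod p) L ∣ R := ⟨_, by rw [hmul, hfinF]⟩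
      have ha1 : 1 ≤ Module.finrank (ZMod p) L := Module.finrank_pos
      refine hno ⟨_, haR, ha1, lt_of_le_of_ne (Nat.le_of_dvd hR haR) fun h => hLtop ?_, ?_⟩
      · exact IntermediateField.eq_of_le_of_finrank_eq le_top
          (by rw [h, IntermediateField.finrank_top', hfinF])
      · rw [hdiv _ haR ha1, ← hfix]
        have : Fintype L := Fintype.ofFinite L
        have hcard := Module.card_eq_pow_finrank (K := ZMod p) (V := L)
        rw [ZMod.card] at hcard
        have := FiniteField.pow_card
          (⟨_, IntermediateField.mem_adjoin_simple_self (ZMod p) ((ω : F) ^ k)⟩ : L)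
        rw [hcard] at this
        exact congrArg Subtype.val this
end

section
/- Let q = p^R with p prime, let k be a divisor of q-1 with k ≥ 2 such that q is even or (q-1)/k is even, and let S be the unique subgroup of order (q-1)/k of 𝔽_q^*. Suppose k is a multiple of (q-1)/(p^a-1) for some divisor a of R with a < R, so that Γ = GPaley(q,(q-1)/k) is disconnected. Then the connected component of Γ containing 0 has vertex set equal to the 𝔽_p-linear span U of S, which is a proper subfield 𝔽_{p^{a'}} of 𝔽_q containing S, and this component (the induced subgraph on U) is isomorphic to the generalised Paley graph GPaley(p^{a'}, (p^{a'}-1)/k') where k' = k(p^{a'}-1)/(q-1). -/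
lemma mul_mem_span_unitsSet {F : Type*} [Field F] {p : ℕ} [Algebra (ZMod p) F]
    {S : Subgroup Fˣ} {x y : F} (hx : x ∈ Submodule.span (ZMod p) (unitsSet S))
    (hy : y ∈ Submodule.span (ZMod p) (unitsSet S)) :
    x * y ∈ Submodule.span (ZMod p) (unitsSet S) := by
  have h := Submodule.mul_mem_mul hx hy
  rw [Submodule.span_mul_span] at h
  refine Submodule.span_mono ?_ h
  rintro _ ⟨_, ⟨u, hu, rfl⟩, _, ⟨v, hv, rfl⟩, rfl⟩
  exact ⟨u * v, S.mul_mem hu hv, by simp⟩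

/-- The `𝔽ₚ`-span of a multiplicative subgroup of a finite field, as a subfield. -/
def spanSubfield {F : Type*} [Field F] [Fintype F] (p : ℕ) [Algebra (ZMod p) F]
    (S : Subgroup Fˣ) : Subfield F where
  carrier := Submodule.span (ZMod p) (unitsSet S)
  zero_mem' := Submodule.zero_mem _
  add_mem' := Submodule.add_mem _
  neg_mem' := Submodule.neg_mem _
  one_mem' := Submodule.subset_span ⟨1, S.one_mem, rfl⟩
  mul_mem' := mul_mem_span_unitsSet
  inv_mem' := by
    intro x hx
    have hpow : ∀ n : ℕ, x ^ n ∈ Submodule.span (ZMod p) (unitsSet S) := by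
      intro n
      induction n with
      | zero => exact Submodule.subset_span ⟨1, S.one_mem, by simp⟩
      | succ n ih => rw [pow_succ']; exact mul_mem_span_unitsSet hx ih
    -- For nonzero `x` in a field of order `q`, `x⁻¹ = x ^ (q - 2)`.
    by_cases h0 : x = 0
    · subst h0; simp
    · have hinv : x⁻¹ = x ^ (Fintype.card F - 2) := by
        have hc := Fintype.one_lt_card (α := F)
        refine (eq_inv_of_mul_eq_one_left ?_).symm
        rw [← pow_succ,
          show Fintype.card F - 2 + 1 = Fintype.card F - 1 by omega]
        exact FiniteField.pow_card_sub_one_eq_one x h0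
      rw [hinv]
      exact hpow _

lemma mem_spanSubfield {F : Type*} [Field F] [Fintype F] {p : ℕ} [Algebra (ZMod p) F]
    {S : Subgroup Fˣ} {x : F} :
    x ∈ spanSubfield p S ↔ x ∈ Submodule.span (ZMod p) (unitsSet S) := Iff.rfl

/-- Translating a vertex by an element of the span of `S` stays in its connected component. -/
lemma reachable_add_of_mem_span {F : Type*} [Field F] {p : ℕ} (hp : p.Prime)
    [Algebra (ZMod p) F] {S : Subgroup Fˣ} {x : F}
    (hx : x ∈ Submodule.span (ZMod p) (unitsSet S)) :
    ∀ y : F, (gpaley (unitsSet S)).Reachable y (y + x) := by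
  induction hx using Submodule.span_induction with
  | mem x h =>
    intro y
    apply SimpleGraph.Adj.reachable
    obtain ⟨u, hu, rfl⟩ := h
    rw [gpaley, SimpleGraph.fromRel_adj]
    exact ⟨by simp, Or.inr ⟨u, hu, by simp⟩⟩
  | zero => intro y; simp
  | add x z _ _ hx hz =>
    intro y
    rw [← add_assoc]
    exact (hx y).trans (hz _)
  | smul c x _ hx =>
    have : NeZero p := ⟨hp.ne_zero⟩
    obtain ⟨n, rfl⟩ := ZMod.natCast_zmod_surjective c
    intro y
    rw [Nat.cast_smul_eq_nsmul]
    induction n with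
    | zero => simp
    | succ n ih =>
      rw [succ_nsmul, ← add_assoc]
      exact ih.trans (hx _)

lemma supp_eq_spanSubfield {F : Type*} [Field F] [Fintype F] {p : ℕ} (hp : p.Prime)
    [Algebra (ZMod p) F] (S : Subgroup Fˣ) :
    ((gpaley (unitsSet S)).connectedComponentMk 0).supp = (spanSubfield p S : Set F) := by
  ext x
  rw [SimpleGraph.ConnectedComponent.mem_supp_iff, SimpleGraph.ConnectedComponent.eq]
  constructor
  · rintro ⟨w⟩
    -- Along a walk, membership of the end vertex in the subfield propagates back to the start.
    have key : ∀ {a b : F}, (gpaley (unitsSet S)).Walk a b →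
        b ∈ spanSubfield p S → a ∈ spanSubfield p S := by
      intro a b w
      induction w with
      | nil => exact id
      | @cons a b c h _ ih =>
        intro hc
        have hb := ih hc
        rw [gpaley, SimpleGraph.fromRel_adj] at h
        rcases h.2 with h | h
        · have h' : a - b ∈ spanSubfield p S := Submodule.subset_span h
          simpa using add_mem h' hb
        · have h' : b - a ∈ spanSubfield p S := Submodule.subset_span h
          simpa using sub_mem hb h'
    exact key w (zero_mem _)
  · intro hx
    simpa using (reachable_add_of_mem_span hp (mem_spanSubfield.1 hx) 0).symm

/-- If `|S|` divides `pᵃ - 1`, then the span of `S` consists of roots of `X ^ pᵃ - X`. -/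
lemma pow_eq_self_of_mem_span {F : Type*} [Field F] {p : ℕ} (hp : p.Prime) [CharP F p]
    [Algebra (ZMod p) F] {S : Subgroup Fˣ} {a : ℕ} (hS : Nat.card S ∣ p ^ a - 1) {x : F}
    (hx : x ∈ Submodule.span (ZMod p) (unitsSet S)) : x ^ p ^ a = x := by
  have : Fact p.Prime := ⟨hp⟩
  induction hx using Submodule.span_induction with
  | mem x h =>
    obtain ⟨u, hu, rfl⟩ := h
    have h1 : u ^ (p ^ a - 1) = 1 :=
      orderOf_dvd_iff_pow_eq_one.1 ((Subgroup.orderOf_dvd_natCard S hu).trans hS)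
    have h2 : u ^ p ^ a = u := by
      rw [← Nat.sub_add_cancel (Nat.one_le_pow a p hp.pos), pow_succ, h1, one_mul]
    simpa using congrArg (Units.val) h2
  | zero => exact zero_pow (pow_ne_zero _ hp.ne_zero)
  | add x y _ _ hx hy => rw [add_pow_char_pow, hx, hy]
  | smul c x _ hx =>
    rw [smul_pow, hx, ZMod.pow_card_pow]

lemma card_spanSubfield_le {F : Type*} [Field F] [Fintype F] {p : ℕ} (hp : p.Prime) [CharP F p]
    [Algebra (ZMod p) F] {S : Subgroup Fˣ} {a : ℕ} (ha : 1 ≤ a)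
    (hS : Nat.card S ∣ p ^ a - 1) : Nat.card (spanSubfield p S) ≤ p ^ a := by
  classical
  have h1 : 1 < p ^ a := Nat.one_lt_pow (by omega) hp.one_lt
  have hne := FiniteField.X_pow_card_sub_X_ne_zero F h1
  have hdeg := FiniteField.X_pow_card_sub_X_natDegree_eq F h1
  have hsub : (spanSubfield p S : Set F) ⊆
      ((Polynomial.X ^ p ^ a - Polynomial.X : Polynomial F).roots.toFinset : Set F) := by
    intro x hx
    have := pow_eq_self_of_mem_span hp hS (mem_spanSubfield.1 hx)
    simp [Polynomial.mem_roots hne, this]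
  calc Nat.card (spanSubfield p S) = (spanSubfield p S : Set F).ncard := rfl
    _ ≤ _ := Set.ncard_le_ncard hsub
    _ = _ := Set.ncard_coe_finset _
    _ ≤ _ := Multiset.toFinset_card_le _
    _ ≤ _ := Polynomial.card_roots' _
    _ = _ := hdeg

lemma card_dvd_card_spanSubfield_sub_one {F : Type*} [Field F] [Fintype F] {p : ℕ}
    [Algebra (ZMod p) F] (S : Subgroup Fˣ) :
    Nat.card S ∣ Nat.card (spanSubfield p S) - 1 := by
  classical
  obtain ⟨g, hg⟩ := IsCyclic.exists_ofOrder_eq_natCard (α := S)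
  rw [← hg, orderOf_dvd_iff_pow_eq_one]
  have hmem : ((g : Fˣ) : F) ∈ spanSubfield p S :=
    Submodule.subset_span ⟨g, g.2, rfl⟩
  have hne : (⟨_, hmem⟩ : spanSubfield p S) ≠ 0 := by
    intro h
    exact (g : Fˣ).ne_zero (congrArg Subtype.val h)
  have := Fintype.ofFinite (spanSubfield p S)
  have h := FiniteField.pow_card_sub_one_eq_one _ hne
  rw [← Nat.card_eq_fintype_card] at h
  have h' := congrArg Subtype.val h
  apply Subtype.ext
  apply Units.ext
  simpa using h'

/-- If `k` is a multiple of `(q-1)/(pᵃ-1)` for some proper divisor `a` of `R`, then the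
connected component of `0` in `Γ = GPaley(q,(q-1)/k)` has vertex set the `𝔽ₚ`-span `U` of
`S`, which is a proper subfield `𝔽_{p^{a'}}` of `F` containing `S`, and the induced graph
on it is (isomorphic to) the generalised Paley graph `GPaley(p^{a'}, (p^{a'}-1)/k')` with
`k' = k (p^{a'}-1)/(q-1)`. -/
theorem gpaley_component_of_disconnected {F : Type*} [Field F] [Fintype F]
    (p R k : ℕ) (hp : p.Prime) [CharP F p] [Algebra (ZMod p) F]
    (hR : 1 ≤ R) (hq : Fintype.card F = p ^ R)
    (hk : k ∣ p ^ R - 1) (hk2 : 2 ≤ k)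
    (heven : Even (p ^ R) ∨ Even ((p ^ R - 1) / k))
    (S : Subgroup Fˣ) (hS : Nat.card S = (p ^ R - 1) / k)
    (hdis : ∃ a : ℕ, a ∣ R ∧ 1 ≤ a ∧ a < R ∧ (p ^ R - 1) / (p ^ a - 1) ∣ k) :
    ∃ (K : Subfield F) (a' : ℕ), a' ∣ R ∧ 1 ≤ a' ∧ a' < R ∧
      Nat.card K = p ^ a' ∧
      unitsSet S ⊆ (K : Set F) ∧
      (K : Set F) = (Submodule.span (ZMod p) (unitsSet S) : Set F) ∧
      ((gpaley (unitsSet S)).connectedComponentMk 0).supp = (K : Set F) ∧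
      (unitsSet S).ncard = (p ^ a' - 1) / (k * (p ^ a' - 1) / (p ^ R - 1)) ∧
      Nonempty ((gpaley (unitsSet S)).induce (K : Set F) ≃g
        gpaley {x : K | (x : F) ∈ unitsSet S}) := by
  obtain ⟨a, haR, ha1, haltR, hak⟩ := hdis
  have : Fact p.Prime := ⟨hp⟩
  have hq1 : 1 < p ^ R := Nat.one_lt_pow (by omega) hp.one_lt
  have hpa1 : 1 < p ^ a := Nat.one_lt_pow (by omega) hp.one_lt
  obtain ⟨m, hm⟩ := hk
  have hSm : Nat.card S = m := by
    rw [hS, hm, Nat.mul_div_cancel_left _ (by omega)]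
  -- Writing `k = c (q-1)/(pᵃ-1)` and `q - 1 = k m` gives `pᵃ - 1 = c m`.
  have hSa : Nat.card S ∣ p ^ a - 1 := by
    obtain ⟨d, hd⟩ : p ^ a - 1 ∣ p ^ R - 1 := Nat.pow_sub_one_dvd_pow_sub_one p haR
    obtain ⟨c, hc⟩ := hak
    rw [hd, Nat.mul_div_cancel_left _ (by omega)] at hc
    have hd0 : 0 < d := by
      rcases Nat.eq_zero_or_pos d with h | h
      · subst h; omega
      · exact h
    rw [hSm]
    refine ⟨c, Nat.eq_of_mul_eq_mul_right hd0 ?_⟩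
    rw [← hd, hm, hc]; ring
  have := Fintype.ofFinite (spanSubfield p S)
  obtain ⟨n, -, hn⟩ := FiniteField.card (spanSubfield p S) p
  have hcard : Nat.card (spanSubfield p S) = p ^ (n : ℕ) := by
    rw [Nat.card_eq_fintype_card, hn]
  have hle : (n : ℕ) ≤ a := by
    have h := card_spanSubfield_le hp ha1 hSa
    rw [hcard] at h
    exact (Nat.pow_le_pow_iff_right hp.one_lt).1 h
  have hdvd : (n : ℕ) ∣ R := by
    have h := Module.card_eq_pow_finrank (K := spanSubfield p S) (V := F)
    rw [hq, hn, ← pow_mul] at h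
    exact ⟨_, Nat.pow_right_injective hp.two_le h⟩
  have hncard : (unitsSet S).ncard = m := by
    rw [unitsSet, Set.ncard_image_of_injective _ Units.val_injective, ← hSm]
    rfl
  refine ⟨spanSubfield p S, n, hdvd, n.pos, by omega, hcard, Submodule.subset_span, rfl,
    supp_eq_spanSubfield hp S, ?_, ⟨⟨Equiv.refl _, ?_⟩⟩⟩
  · obtain ⟨t, ht⟩ := card_dvd_card_spanSubfield_sub_one (p := p) S
    rw [hcard, hSm] at ht
    have hpn : 1 < p ^ (n : ℕ) := Nat.one_lt_pow n.pos.ne' hp.one_lt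
    have ht0 : 0 < t := by
      rcases Nat.eq_zero_or_pos t with h | h
      · subst h; omega
      · exact h
    rw [hncard, hm, ht, ← mul_assoc, Nat.mul_div_cancel_left _ (by omega),
      Nat.mul_div_cancel _ ht0]
  · intro x y
    simp only [gpaley, SimpleGraph.comap_adj, SimpleGraph.fromRel_adj]
    exact and_congr (not_congr Subtype.ext_iff) Iff.rfl
end

section
/- Let q = p^R with p prime, let k be a divisor of q-1 with k ≥ 2 such that q is even or (q-1)/k is even, and let Γ = GPaley(q,(q-1)/k). Suppose Γ is connected and k ≠ a(q-1)/(R(p^a-1)) for every proper divisor a of R. Then the automorphism group of Γ acts primitively on the vertex set 𝔽_q (it is transitive and preserves no nontrivial partition of 𝔽_q into blocks). -/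
theorem gpaley_adj_iff {F : Type*} [Field F] (S : Subgroup Fˣ) (x y : F) :
    (gpaley (unitsSet S)).Adj x y ↔
      x ≠ y ∧ ((∃ u ∈ S, (u : F) = x - y) ∨ ∃ u ∈ S, (u : F) = y - x) := by
  simp [gpaley, unitsSet, SimpleGraph.fromRel_adj]

theorem exists_unit_mul_iff {F : Type*} [Field F] {S : Subgroup Fˣ} {u : Fˣ} (hu : u ∈ S) (z : F) :
    (∃ v ∈ S, (v : F) = u * z) ↔ ∃ v ∈ S, (v : F) = z := by
  constructor
  · rintro ⟨v, hv, h⟩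
    exact ⟨u⁻¹ * v, S.mul_mem (S.inv_mem hu) hv, by simp [h]⟩
  · rintro ⟨v, hv, h⟩
    exact ⟨u * v, S.mul_mem hu hv, by simp [h]⟩

/-- The affine map `x ↦ u x + c`, with `u ∈ S`, as an automorphism of the generalised Paley
graph. -/
def affineAut {F : Type*} [Field F] (S : Subgroup Fˣ) (u : Fˣ) (hu : u ∈ S) (c : F) :
    gpaley (unitsSet S) ≃g gpaley (unitsSet S) where
  toEquiv := (Units.mulLeft u).trans (Equiv.addRight c)
  map_rel_iff' := by
    intro x y
    have h (x y : F) : ((u : F) * x + c) - (u * y + c) = u * (x - y) := by ring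
    simp [gpaley_adj_iff, h, exists_unit_mul_iff hu]

@[simp]
theorem affineAut_apply {F : Type*} [Field F] (S : Subgroup Fˣ) (u : Fˣ) (hu : u ∈ S) (c x : F) :
    affineAut S u hu c x = u * x + c := rfl

/-- If `Γ = GPaley(q,(q-1)/k)` is connected and not a Hamming graph, then `Aut(Γ)` acts
primitively on the vertex set: it is transitive, and every nonempty block for the action
of the automorphism group is a singleton or the whole vertex set. -/
theorem gpaley_aut_primitive {F : Type*} [Field F] [Fintype F]
    (p R k : ℕ) (hp : p.Prime) (hR : 1 ≤ R) (hq : Fintype.card F = p ^ R)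
    (hk : k ∣ p ^ R - 1) (hk2 : 2 ≤ k)
    (heven : Even (p ^ R) ∨ Even ((p ^ R - 1) / k))
    (S : Subgroup Fˣ) (hS : Nat.card S = (p ^ R - 1) / k)
    (hconn : (gpaley (unitsSet S)).Connected)
    (hnotham : ∀ a : ℕ, a ∣ R → 1 ≤ a → a < R → k * (R * (p ^ a - 1)) ≠ a * (p ^ R - 1)) :
    (∀ x y : F, ∃ g : gpaley (unitsSet S) ≃g gpaley (unitsSet S), g x = y) ∧
      ∀ B : Set F, B.Nonempty →
        (∀ g : gpaley (unitsSet S) ≃g gpaley (unitsSet S),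
          (fun x => g x) '' B = B ∨ Disjoint ((fun x => g x) '' B) B) →
        B.Subsingleton ∨ B = Set.univ := by
  refine ⟨fun x y => ⟨affineAut S 1 S.one_mem (y - x), by simp⟩, fun B ⟨b, hb⟩ hB => ?_⟩
  have hblock (u : Fˣ) (hu : u ∈ S) (c x : F) (hx : x ∈ B) (hux : u * x + c ∈ B) (y : F)
      (hy : y ∈ B) : u * y + c ∈ B := by
    rcases hB (affineAut S u hu c) with h | h
    · rw [← h]
      exact ⟨y, hy, rfl⟩
    · exact (Set.disjoint_left.mp h ⟨x, hx, rfl⟩ hux).elim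
  have hadd (v w : F) (hv : b + v ∈ B) (hw : b + w ∈ B) : b + (v + w) ∈ B := by
    have := hblock 1 S.one_mem w b hb (by simpa using hw) _ hv
    simpa [add_assoc] using this
  have hneg (w : F) (hw : b + w ∈ B) : b + -w ∈ B := by
    have := hblock 1 S.one_mem (-w) (b + w) hw (by simpa using hb) _ hb
    simpa using this
  have hmul (u : Fˣ) (hu : u ∈ S) (w : F) (hw : b + w ∈ B) : b + u * w ∈ B := by
    -- The map `x ↦ u (x - b) + b` fixes `b`.
    have := hblock u hu (b - u * b) b hb (by simpa using hb) _ hw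
    convert this using 1
    ring
  have hstep (x y : F) (hxy : (gpaley (unitsSet S)).Adj x y)
      (hx : ∀ w, b + w ∈ B → b + x * w ∈ B) (w : F) (hw : b + w ∈ B) : b + y * w ∈ B := by
    rcases ((gpaley_adj_iff S x y).mp hxy).2 with ⟨u, hu, h⟩ | ⟨u, hu, h⟩
    · have := hadd _ _ (hx w hw) (hneg _ (hmul u hu w hw))
      convert this using 2
      rw [h]
      ring
    · have := hadd _ _ (hx w hw) (hmul u hu w hw)
      convert this using 2
      rw [h]
      ring
  have hmult (t : F) : ∀ w, b + w ∈ B → b + t * w ∈ B := by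
    have hwalk (x y : F) (P : (gpaley (unitsSet S)).Walk x y) :
        (∀ w, b + w ∈ B → b + x * w ∈ B) → ∀ w, b + w ∈ B → b + y * w ∈ B := by
      induction P with
      | nil => exact id
      | cons h _ ih => exact fun hx => ih (hstep _ _ h hx)
    obtain ⟨P⟩ := hconn.preconnected 0 t
    exact hwalk 0 t P (by simpa using fun _ _ => hb)
  by_cases hsub : ∀ x ∈ B, x = b
  · exact Or.inl fun x hx y hy => (hsub x hx).trans (hsub y hy).symm
  · push Not at hsub
    obtain ⟨x, hx, hxb⟩ := hsub
    have hne : x - b ≠ 0 := sub_ne_zero.mpr hxb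
    refine Or.inr (Set.eq_univ_of_forall fun y => ?_)
    have := hmult ((y - b) / (x - b)) (x - b) (by simpa using hx)
    simpa [div_mul_cancel₀ _ hne] using this
end

section
/- Let q = p^R with p prime, let k be a divisor of q-1 with k ≥ 2 such that q is even or (q-1)/k is even, let S be the unique subgroup of order (q-1)/k of 𝔽_q^*, and let Γ = GPaley(q,(q-1)/k). If k divides p-1, then every graph automorphism g of Γ has the form g(x) = φ(x)·s + c for some field automorphism φ of 𝔽_q, some s ∈ S, and some c ∈ 𝔽_q. -/
/-! ### Power sums and binomial coefficients -/

theorem sum_pow_of_lt {F : Type*} [Field F] [Fintype F] (n : ℕ)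
    (hn : n < 2 * (Fintype.card F - 1)) :
    ∑ t : F, t ^ n = if n = Fintype.card F - 1 then -1 else 0 := by
  classical
  have hq : 1 < Fintype.card F := Fintype.one_lt_card
  split_ifs with h
  · subst h
    have h1 : ∀ t : F, t ^ (Fintype.card F - 1) = 1 - if t = 0 then 1 else 0 := by
      intro t
      split_ifs with ht
      · rw [ht, zero_pow (by omega), sub_self]
      · rw [FiniteField.pow_card_sub_one_eq_one t ht, sub_zero]
    simp [h1]
  · rcases Nat.lt_or_ge n (Fintype.card F - 1) with h' | h'
    · exact FiniteField.sum_pow_lt_card_sub_one F n h'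
    · obtain ⟨r, hr⟩ : ∃ r, n = Fintype.card F + r := ⟨n - Fintype.card F, by omega⟩
      have h1 : ∀ t : F, t ^ n = t ^ (r + 1) := by
        intro t
        rw [hr, pow_add, FiniteField.pow_card, pow_succ']
      simp only [h1]
      exact FiniteField.sum_pow_lt_card_sub_one F _ (by omega)

/-- In the binomial expansion of `(z - t) ^ b` only the term whose total exponent of `t` is `q - 1`
survives summation over `t`. If `b < q - 1 - n` there is no such term, and the binomial coefficient
on the right is zero. -/
theorem sum_pow_mul_sub_pow {F : Type*} [Field F] [Fintype F] (n b : ℕ)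
    (hn : n ≤ Fintype.card F - 1) (hb : n + b < 2 * (Fintype.card F - 1)) (z : F) :
    ∑ t : F, t ^ n * (z - t) ^ b =
      -((-1) ^ (Fintype.card F - 1 - n) * (b.choose (Fintype.card F - 1 - n) : F)) *
        z ^ (b - (Fintype.card F - 1 - n)) := by
  have h1 : ∀ t : F, t ^ n * (z - t) ^ b =
      ∑ m ∈ Finset.range (b + 1), (-1) ^ m * (b.choose m : F) * z ^ (b - m) * t ^ (n + m) := by
    intro t
    rw [sub_eq_neg_add, add_pow, Finset.mul_sum]
    refine Finset.sum_congr rfl fun m _ => ?_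
    rw [neg_pow t m, pow_add]
    ring
  simp only [h1]
  rw [Finset.sum_comm]
  simp only [← Finset.mul_sum]
  have h2 : ∀ m ∈ Finset.range (b + 1),
      (-1) ^ m * (b.choose m : F) * z ^ (b - m) * ∑ t : F, t ^ (n + m) =
      if m = Fintype.card F - 1 - n then -((-1) ^ m * (b.choose m : F)) * z ^ (b - m) else 0 := by
    intro m hm
    rw [Finset.mem_range] at hm
    rw [sum_pow_of_lt _ (by omega)]
    by_cases h : m = Fintype.card F - 1 - n
    · rw [if_pos h, if_pos (by omega)]; ring
    · rw [if_neg h, if_neg (by omega), mul_zero]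
  rw [Finset.sum_congr rfl h2, Finset.sum_ite_eq']
  split_ifs with h
  · rfl
  · rw [Nat.choose_eq_zero_of_lt (by simp at h; omega)]
    simp

/-- A case of Lucas' theorem: all digits of the upper number equal `c`, and those of the lower number
are at most `c`. -/
theorem not_dvd_choose_digits {p : ℕ} (hp : p.Prime) {c : ℕ} (hc : c < p) (R : ℕ) :
    ∀ e : ℕ → ℕ, (∀ i, e i ≤ c) →
      ¬ p ∣ (∑ i ∈ Finset.range R, c * p ^ i).choose (∑ i ∈ Finset.range R, e i * p ^ i) := by
  have := Fact.mk hp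
  induction R with
  | zero => intro e _; simpa using hp.one_lt.ne'
  | succ R ih =>
    intro e he
    have hsplit : ∀ f : ℕ → ℕ, ∑ i ∈ Finset.range (R + 1), f i * p ^ i =
        f 0 + p * ∑ i ∈ Finset.range R, f (i + 1) * p ^ i := by
      intro f
      rw [Finset.sum_range_succ', Finset.mul_sum, add_comm]
      simp only [pow_zero, mul_one, pow_succ]
      congr 1
      exact Finset.sum_congr rfl fun i _ => by ring
    rw [hsplit e, hsplit fun _ => c]
    have hL := Choose.choose_modEq_choose_mod_mul_choose_div_nat (p := p)
      (n := c + p * ∑ i ∈ Finset.range R, c * p ^ i)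
      (k := e 0 + p * ∑ i ∈ Finset.range R, e (i + 1) * p ^ i)
    rw [Nat.add_mul_mod_self_left, Nat.add_mul_mod_self_left, Nat.mod_eq_of_lt hc,
      Nat.mod_eq_of_lt ((he 0).trans_lt hc), Nat.add_mul_div_left _ _ hp.pos,
      Nat.add_mul_div_left _ _ hp.pos, Nat.div_eq_of_lt hc,
      Nat.div_eq_of_lt ((he 0).trans_lt hc), zero_add, zero_add] at hL
    rw [hL.dvd_iff dvd_rfl, hp.dvd_mul, not_or]
    refine ⟨fun h => ?_, ih _ fun i => he _⟩
    have := hp.dvd_factorial.1 (h.trans ⟨_, by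
      rw [← Nat.choose_mul_factorial_mul_factorial (he 0), mul_assoc]⟩)
    omega

/-! ### Invariance of `(x - y) ^ d` -/

/-- The convolution of `z ^ (d * (k - l))` with `z ^ (d * a)`. For `a < l` the truncated exponent
`a - l` is harmless, since the binomial coefficient vanishes. -/
theorem sum_kernel_mul {F : Type*} [Field F] [Fintype F] {d k : ℕ}
    (hdk : d * k = Fintype.card F - 1) {a l : ℕ} (ha : a < k) (hl : 1 ≤ l) (hlk : l ≤ k) (x y : F) :
    ∑ t : F, ((t - y) ^ d) ^ (k - l) * ((x - t) ^ d) ^ a =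
      -((-1) ^ (d * l) * ((d * a).choose (d * l) : F)) * ((x - y) ^ d) ^ (a - l) := by
  have hq : 1 < Fintype.card F := Fintype.one_lt_card
  have hd : 0 < d := Nat.pos_of_ne_zero fun h => by simp [h] at hdk; omega
  have e1 : Fintype.card F - 1 - d * (k - l) = d * l := by
    rw [← hdk, ← Nat.mul_sub]; congr 1; omega
  have h := sum_pow_mul_sub_pow (F := F) (d * (k - l)) (d * a)
    (by rw [← hdk]; exact Nat.mul_le_mul_left _ (Nat.sub_le _ _))
    (by
      rw [← hdk, ← Nat.mul_add, mul_left_comm]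
      exact Nat.mul_lt_mul_of_pos_left (by omega) hd) (x - y)
  rw [e1, ← Nat.mul_sub] at h
  simp only [← pow_mul]
  rw [← h]
  refine Fintype.sum_equiv (Equiv.subRight y) _ _ fun t => ?_
  simp

/-- The polynomial `X + X ^ 2 + ⋯ + X ^ (k - 1)`, summed from the top exponent downwards. On the
values `w = z ^ d` it depends only on whether `w = 0` and whether `w = 1`, so up to constants it
encodes adjacency in the graph. -/
noncomputable def kernelPoly (F : Type*) [Field F] (k : ℕ) : Polynomial F :=
  ∑ l ∈ Finset.Ico 1 k, Polynomial.X ^ (k - l)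

theorem kernelPoly_eval {F : Type*} [Field F] (k : ℕ) (w : F) :
    (kernelPoly F k).eval w = ∑ l ∈ Finset.Ico 1 k, w ^ (k - l) := by
  simp [kernelPoly, Polynomial.eval_finsetSum]

theorem kernelPoly_eval_eq {F : Type*} [Field F] {k : ℕ} (hk : 1 ≤ k) {w : F}
    (hw : w ^ k = 1) (hw1 : w ≠ 1) : (kernelPoly F k).eval w = -1 := by
  have h : ∑ l ∈ Finset.Ico 1 k, w ^ (k - l) = ∑ l ∈ Finset.Ico 1 k, w ^ l := by
    have := Finset.sum_Ico_reflect (fun j => w ^ j) 1 (m := k) (n := k) (by omega)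
    rw [this]
    simp
  have h0 : ∑ l ∈ Finset.range k, w ^ l = 0 := by
    rw [geom_sum_eq hw1, hw, sub_self, zero_div]
  rw [kernelPoly_eval, h]
  rw [Finset.range_eq_Ico, Finset.sum_eq_sum_Ico_succ_bot (by omega)] at h0
  simp only [pow_zero, zero_add] at h0
  linear_combination h0

theorem kernelPoly_invariant {F : Type*} [Field F] [Fintype F] {d k : ℕ}
    (hdk : d * k = Fintype.card F - 1) (g : F ≃ F)
    (hg : ∀ x y, (g x - g y) ^ d = 1 ↔ (x - y) ^ d = 1) (x y : F) :
    (kernelPoly F k).eval ((g x - g y) ^ d) = (kernelPoly F k).eval ((x - y) ^ d) := by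
  have hq : 1 < Fintype.card F := Fintype.one_lt_card
  have hk : 1 ≤ k := Nat.pos_of_ne_zero fun h => by simp [h] at hdk; omega
  rcases eq_or_ne x y with rfl | hxy
  · simp
  have hpow : ∀ z : F, z ≠ 0 → (z ^ d) ^ k = 1 := fun z hz => by
    rw [← pow_mul, hdk, FiniteField.pow_card_sub_one_eq_one z hz]
  by_cases h : (x - y) ^ d = 1
  · rw [h, (hg x y).2 h]
  · rw [kernelPoly_eval_eq hk (hpow _ (sub_ne_zero.2 hxy)) h,
      kernelPoly_eval_eq hk (hpow _ (sub_ne_zero.2 (g.injective.ne hxy))) (mt (hg x y).1 h)]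

/-- The polynomial `P` is that of the `(i + 1)`-fold convolution power of `kernelPoly F k`; each
convolution with the kernel lowers the degree by exactly one. -/
theorem exists_invariant_poly {F : Type*} [Field F] [Fintype F] {d k : ℕ}
    (hdk : d * k = Fintype.card F - 1) (hk2 : 2 ≤ k)
    (hch : ∀ a, 1 ≤ a → a < k → ((d * a).choose d : F) ≠ 0) (g : F ≃ F)
    (hg : ∀ x y, (g x - g y) ^ d = 1 ↔ (x - y) ^ d = 1) (i : ℕ) (hi : i + 2 ≤ k) :
    ∃ P : Polynomial F, P.natDegree ≤ k - 1 - i ∧ P.coeff (k - 1 - i) ≠ 0 ∧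
      ∀ x y, P.eval ((g x - g y) ^ d) = P.eval ((x - y) ^ d) := by
  induction i with
  | zero =>
    refine ⟨kernelPoly F k, ?_, ?_, kernelPoly_invariant hdk g hg⟩
    · refine Polynomial.natDegree_sum_le_of_forall_le _ _ fun l hl => ?_
      rw [Finset.mem_Ico] at hl
      rw [Polynomial.natDegree_X_pow]
      omega
    · rw [kernelPoly, Polynomial.finsetSum_coeff, Finset.sum_eq_single 1]
      · simp [Polynomial.coeff_X_pow]
      · intro l hl h1
        rw [Finset.mem_Ico] at hl
        rw [Polynomial.coeff_X_pow, if_neg (by omega)]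
      · intro h
        exact absurd (Finset.mem_Ico.2 ⟨le_rfl, by omega⟩) h
  | succ i ih =>
    obtain ⟨P, hdeg, hcoeff, hinv⟩ := ih (by omega)
    obtain ⟨r, hr⟩ : ∃ r, k - 1 - i = r + 1 := ⟨k - 2 - i, by omega⟩
    have hr' : k - 1 - (i + 1) = r := by omega
    rw [hr] at hdeg hcoeff
    rw [hr']
    let c : ℕ → ℕ → F := fun a l => -((-1) ^ (d * l) * ((d * a).choose (d * l) : F))
    let Q : Polynomial F := ∑ a ∈ Finset.range (r + 2), ∑ l ∈ Finset.Ico 1 k,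
      Polynomial.C (P.coeff a * c a l) * Polynomial.X ^ (a - l)
    -- `Q` represents the convolution of the kernel with the function represented by `P`.
    have hQ : ∀ x y : F, Q.eval ((x - y) ^ d) =
        ∑ t : F, (kernelPoly F k).eval ((t - y) ^ d) * P.eval ((x - t) ^ d) := by
      intro x y
      have h1 : ∀ t : F, (kernelPoly F k).eval ((t - y) ^ d) * P.eval ((x - t) ^ d) =
          ∑ a ∈ Finset.range (r + 2), ∑ l ∈ Finset.Ico 1 k,
            P.coeff a * (((t - y) ^ d) ^ (k - l) * ((x - t) ^ d) ^ a) := by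
        intro t
        rw [kernelPoly_eval, Polynomial.eval_eq_sum_range' (n := r + 2) (by omega),
          Finset.sum_mul_sum, Finset.sum_comm]
        exact Finset.sum_congr rfl fun a _ => Finset.sum_congr rfl fun l _ => by ring
      simp only [h1]
      rw [Finset.sum_comm, Polynomial.eval_finsetSum]
      refine Finset.sum_congr rfl fun a ha => ?_
      rw [Finset.sum_comm, Polynomial.eval_finsetSum]
      refine Finset.sum_congr rfl fun l hl => ?_
      rw [Finset.mem_range] at ha
      rw [Finset.mem_Ico] at hl
      rw [← Finset.mul_sum, sum_kernel_mul hdk (by omega) hl.1 hl.2.le]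
      simp [c, mul_assoc]
    refine ⟨Q, ?_, ?_, ?_⟩
    · refine Polynomial.natDegree_sum_le_of_forall_le _ _ fun a ha =>
        Polynomial.natDegree_sum_le_of_forall_le _ _ fun l hl => ?_
      rw [Finset.mem_range] at ha
      rw [Finset.mem_Ico] at hl
      exact (Polynomial.natDegree_C_mul_X_pow_le _ _).trans (by omega)
    · rw [Polynomial.finsetSum_coeff, Finset.sum_eq_single (r + 1),
        Polynomial.finsetSum_coeff, Finset.sum_eq_single 1]
      · rw [Polynomial.coeff_C_mul_X_pow, if_pos (by omega)]
        simpa [c, hcoeff] using hch (r + 1) (by omega) (by omega)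
      · intro l hl h1
        rw [Finset.mem_Ico] at hl
        rw [Polynomial.coeff_C_mul_X_pow, if_neg (by omega)]
      · intro h
        exact absurd (Finset.mem_Ico.2 ⟨le_rfl, by omega⟩) h
      · intro a ha h1
        rw [Finset.mem_range] at ha
        rw [Polynomial.finsetSum_coeff]
        refine Finset.sum_eq_zero fun l hl => ?_
        rw [Finset.mem_Ico] at hl
        rw [Polynomial.coeff_C_mul_X_pow, if_neg (by omega)]
      · intro h
        exact absurd (Finset.mem_range.2 (by omega)) h
    · intro x y
      rw [hQ, hQ, ← Equiv.sum_comp g]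
      exact Finset.sum_congr rfl fun t _ => by
        rw [kernelPoly_invariant hdk g hg, hinv]

theorem pow_sub_invariant {F : Type*} [Field F] [Fintype F] {d k : ℕ}
    (hdk : d * k = Fintype.card F - 1) (hk2 : 2 ≤ k)
    (hch : ∀ a, 1 ≤ a → a < k → ((d * a).choose d : F) ≠ 0) (g : F ≃ F)
    (hg : ∀ x y, (g x - g y) ^ d = 1 ↔ (x - y) ^ d = 1) (x y : F) :
    (g x - g y) ^ d = (x - y) ^ d := by
  obtain ⟨P, hdeg, hcoeff, hinv⟩ := exists_invariant_poly hdk hk2 hch g hg (k - 2) (by omega)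
  have h1 : k - 1 - (k - 2) = 1 := by omega
  rw [h1] at hdeg hcoeff
  have h := hinv x y
  rw [Polynomial.eq_X_add_C_of_natDegree_le_one hdeg] at h
  simp only [Polynomial.eval_add, Polynomial.eval_mul, Polynomial.eval_C, Polynomial.eval_X] at h
  exact mul_left_cancel₀ hcoeff (add_right_cancel h)

/-! ### Functions as polynomials in the Frobenius powers -/

/-- The point `(x, x ^ p, …, x ^ p ^ (R - 1))`. -/
def powVec {F : Type*} [Field F] (p R : ℕ) (x : F) : Fin R → F := fun i => x ^ p ^ (i : ℕ)

/-- The number whose base-`p` digits are the entries of `e`. -/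
def digitSum (p : ℕ) {R : ℕ} (e : Fin R →₀ ℕ) : ℕ := ∑ i, e i * p ^ (i : ℕ)

theorem digitSum_eq {p R : ℕ} (e : Fin R →₀ ℕ) (he : ∀ i, e i < p) :
    digitSum p e = (finFunctionFinEquiv fun i => (⟨e i, he i⟩ : Fin p) : Fin (p ^ R)) := by
  simp [digitSum]

theorem digitSum_lt {p R : ℕ} (e : Fin R →₀ ℕ) (he : ∀ i, e i < p) : digitSum p e < p ^ R := by
  rw [digitSum_eq e he]; exact Fin.isLt _

theorem digitSum_inj {p R : ℕ} {e f : Fin R →₀ ℕ} (he : ∀ i, e i < p) (hf : ∀ i, f i < p)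
    (h : digitSum p e = digitSum p f) : e = f := by
  rw [digitSum_eq e he, digitSum_eq f hf, Fin.val_inj, EmbeddingLike.apply_eq_iff_eq] at h
  ext i
  simpa using congrArg Fin.val (congrFun h i)

theorem eval_powVec {F : Type*} [Field F] (p R : ℕ) (x : F) (P : MvPolynomial (Fin R) F) :
    MvPolynomial.eval (powVec p R x) P = ∑ e ∈ P.support, P.coeff e * x ^ digitSum p e := by
  rw [MvPolynomial.eval_eq']
  refine Finset.sum_congr rfl fun e _ => ?_
  rw [digitSum, ← Finset.prod_pow_eq_pow_sum]
  congr 1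
  exact Finset.prod_congr rfl fun i _ => by rw [powVec, ← pow_mul, mul_comm]

/-- Distinct monomials with exponents below `p` become distinct powers `x ^ n` with `n < q`, and these
are linearly independent functions on `F`. -/
theorem eq_zero_of_eval_powVec {F : Type*} [Field F] [Fintype F] {p R : ℕ}
    (hq : Fintype.card F = p ^ R) (P : MvPolynomial (Fin R) F) (hP : ∀ i, P.degreeOf i < p)
    (h : ∀ x, MvPolynomial.eval (powVec p R x) P = 0) : P = 0 := by
  classical
  have hlt : ∀ e ∈ P.support, ∀ i, e i < p := fun e he i =>
    (MvPolynomial.monomial_le_degreeOf i he).trans_lt (hP i)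
  let f : Polynomial F := ∑ e ∈ P.support, Polynomial.C (P.coeff e) * Polynomial.X ^ digitSum p e
  have hpos : 0 < p ^ R := hq ▸ Fintype.card_pos
  have hf : f = 0 := by
    refine Polynomial.eq_zero_of_natDegree_lt_card_of_eval_eq_zero f (f := id)
      Function.injective_id (fun x => ?_) ?_
    · rw [← h x, eval_powVec]
      simp [f, Polynomial.eval_finsetSum]
    · rw [hq]
      refine Nat.lt_of_le_pred hpos
        (Polynomial.natDegree_sum_le_of_forall_le _ _ fun e he => ?_)
      exact (Polynomial.natDegree_C_mul_X_pow_le _ _).trans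
        (Nat.le_pred_of_lt (digitSum_lt e (hlt e he)))
  rw [← MvPolynomial.support_eq_empty, Finset.eq_empty_iff_forall_notMem]
  intro e he
  have h1 : f.coeff (digitSum p e) = P.coeff e := by
    rw [Polynomial.finsetSum_coeff, Finset.sum_eq_single e]
    · simp
    · intro e' he' hne
      rw [Polynomial.coeff_C_mul_X_pow, if_neg]
      exact fun hh => hne (digitSum_inj (hlt e he) (hlt e' he') hh).symm
    · exact fun hn => absurd he hn
  rw [hf, Polynomial.coeff_zero] at h1
  exact (MvPolynomial.mem_support_iff.1 he) h1.symm

theorem ext_of_eval_powVec {F : Type*} [Field F] [Fintype F] {p R : ℕ}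
    (hq : Fintype.card F = p ^ R) {P Q : MvPolynomial (Fin R) F} (hP : ∀ i, P.degreeOf i < p)
    (hQ : ∀ i, Q.degreeOf i < p)
    (h : ∀ x, MvPolynomial.eval (powVec p R x) P = MvPolynomial.eval (powVec p R x) Q) :
    P = Q := by
  rw [← sub_eq_zero]
  refine eq_zero_of_eval_powVec hq _ (fun i => ?_) fun x => by rw [map_sub, h, sub_self]
  exact (MvPolynomial.degreeOf_sub_le _ _ _).trans_lt (max_lt (hP i) (hQ i))

/-- The polynomial is `∏ i, (X i - y ^ p ^ i) ^ m`. -/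
theorem exists_poly_sub_pow {F : Type*} [Field F] {p R : ℕ} [Fact p.Prime] [CharP F p]
    (m : ℕ) (y : F) :
    ∃ P : MvPolynomial (Fin R) F, (∀ i, P.degreeOf i ≤ m) ∧
      ∀ x, MvPolynomial.eval (powVec p R x) P = (x - y) ^ ∑ i ∈ Finset.range R, m * p ^ i := by
  classical
  refine ⟨∏ j : Fin R, (MvPolynomial.X j - MvPolynomial.C (y ^ p ^ (j : ℕ))) ^ m,
    fun i => ?_, fun x => ?_⟩
  · refine (MvPolynomial.degreeOf_prod_le _ _ _).trans ?_
    have h1 : ∀ j : Fin R, MvPolynomial.degreeOf i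
        ((MvPolynomial.X j - MvPolynomial.C (y ^ p ^ (j : ℕ)) : MvPolynomial (Fin R) F) ^ m) ≤
        if i = j then m else 0 := by
      intro j
      refine (MvPolynomial.degreeOf_pow_le _ _ _).trans ?_
      have h2 := MvPolynomial.degreeOf_sub_le i (MvPolynomial.X j : MvPolynomial (Fin R) F)
        (MvPolynomial.C (y ^ p ^ (j : ℕ)))
      rw [MvPolynomial.degreeOf_X, MvPolynomial.degreeOf_C, Nat.max_zero] at h2
      refine (Nat.mul_le_mul_left m h2).trans ?_
      split_ifs <;> simp
    refine (Finset.sum_le_sum fun j _ => h1 j).trans ?_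
    simp
  · rw [map_prod, ← Finset.prod_pow_eq_pow_sum, Finset.prod_range]
    refine Finset.prod_congr rfl fun j _ => ?_
    rw [map_pow, map_sub, MvPolynomial.eval_X, MvPolynomial.eval_C, powVec, ← sub_pow_char_pow,
      ← pow_mul, mul_comm]

/-- The monomial `z ^ n`, for `n` with digits `e i ≤ m`, is a linear combination of the functions
`(z - y) ^ d`; substituting `z = g x` and `y = g y'` and using the invariance of `(x - y) ^ d`
expresses `g x ^ n` through the functions `(x - y') ^ d`. -/
theorem exists_poly_comp {F : Type*} [Field F] [Fintype F] {p R m : ℕ} [hp : Fact p.Prime]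
    [CharP F p] (hm : m < p) (hd : ∑ i ∈ Finset.range R, m * p ^ i < Fintype.card F - 1)
    (g : F ≃ F)
    (hg : ∀ x y, (g x - g y) ^ (∑ i ∈ Finset.range R, m * p ^ i) =
      (x - y) ^ (∑ i ∈ Finset.range R, m * p ^ i))
    (e : ℕ → ℕ) (he : ∀ i, e i ≤ m) :
    ∃ P : MvPolynomial (Fin R) F, (∀ i, P.degreeOf i ≤ m) ∧
      ∀ x, MvPolynomial.eval (powVec p R x) P = g x ^ ∑ i ∈ Finset.range R, e i * p ^ i := by
  classical
  have hle : ∑ i ∈ Finset.range R, e i * p ^ i ≤ ∑ i ∈ Finset.range R, m * p ^ i :=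
    Finset.sum_le_sum fun i _ => Nat.mul_le_mul_right _ (he i)
  have hch := not_dvd_choose_digits hp.out hm R e he
  set d := ∑ i ∈ Finset.range R, m * p ^ i with hd_def
  set n := ∑ i ∈ Finset.range R, e i * p ^ i
  -- The exponent for which summing `t ^ N * (z - t) ^ d` over `t` isolates the monomial `z ^ n`.
  set N := Fintype.card F - 1 - (d - n) with hN
  have hsum := sum_pow_mul_sub_pow (F := F) N d (by omega) (by omega)
  have e1 : Fintype.card F - 1 - N = d - n := by omega
  have e2 : d - (d - n) = n := by omega
  rw [e1, e2, Nat.choose_symm hle] at hsum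
  set c : F := -((-1) ^ (d - n) * (d.choose n : F)) with hc_def
  have hc : c ≠ 0 := by
    have h1 : (d.choose n : F) ≠ 0 := by rwa [Ne, CharP.cast_eq_zero_iff F p]
    simpa [hc_def] using h1
  choose T hTdeg hT using fun y : F => exists_poly_sub_pow (F := F) (p := p) (R := R) m y
  refine ⟨∑ y : F, MvPolynomial.C (c⁻¹ * g y ^ N) * T y, fun i => ?_, fun x => ?_⟩
  · refine (MvPolynomial.degreeOf_sum_le _ _ _).trans (Finset.sup_le fun y _ => ?_)
    exact (MvPolynomial.degreeOf_C_mul_le _ _ _).trans (hTdeg y i)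
  · rw [map_sum]
    simp only [map_mul, MvPolynomial.eval_C, hT]
    rw [eq_comm, ← inv_mul_cancel_left₀ hc (g x ^ n), ← hsum, ← Equiv.sum_comp g, Finset.mul_sum]
    exact Finset.sum_congr rfl fun y _ => by rw [← hd_def, hg, mul_assoc]

theorem pow_prime_pow_mod {F : Type*} [Field F] [Fintype F] {p R : ℕ}
    (hq : Fintype.card F = p ^ R) (x : F) (n : ℕ) : x ^ p ^ (n % R) = x ^ p ^ n := by
  conv_rhs => rw [← Nat.div_add_mod n R, pow_add, pow_mul, pow_mul, ← hq,
    FiniteField.pow_card_pow]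

/-- The Frobenius twist of `P`: coefficients are raised to the power `p ^ s` and the variables are
shifted cyclically, because `x ^ p ^ R = x`. -/
theorem exists_poly_frobenius {F : Type*} [Field F] [Fintype F] {p R : ℕ} [NeZero R]
    [hp : Fact p.Prime] [CharP F p] (hq : Fintype.card F = p ^ R) (P : MvPolynomial (Fin R) F)
    (s : Fin R) :
    ∃ Q : MvPolynomial (Fin R) F, (∀ i, Q.degreeOf (i + s) = P.degreeOf i) ∧
      ∀ x, MvPolynomial.eval (powVec p R x) Q =
        MvPolynomial.eval (powVec p R x) P ^ p ^ (s : ℕ) := by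
  classical
  refine ⟨MvPolynomial.rename (· + s) (MvPolynomial.map (iterateFrobenius F p s) P),
    fun i => ?_, fun x => ?_⟩
  · rw [MvPolynomial.degreeOf_rename_of_injective (add_left_injective s),
      MvPolynomial.degreeOf_def, MvPolynomial.degreeOf_def,
      MvPolynomial.degrees_map_of_injective _ (iterateFrobenius F p s).injective]
  · rw [MvPolynomial.eval_rename, MvPolynomial.eval_map, ← iterateFrobenius_def,
      ← MvPolynomial.eval₂_id, MvPolynomial.eval₂_comp_left, RingHom.comp_id]
    congr 1
    ext i
    simp only [Function.comp, powVec, iterateFrobenius_def, Fin.val_add]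
    rw [pow_prime_pow_mod hq, ← pow_mul, pow_add]

theorem exists_frobenius_form {F : Type*} [Field F] [Fintype F] {p R m : ℕ} [NeZero R]
    [hp : Fact p.Prime] [CharP F p] (hq : Fintype.card F = p ^ R) (hm1 : 1 ≤ m) (hm : 2 * m < p)
    (hd : ∑ i ∈ Finset.range R, m * p ^ i < Fintype.card F - 1) (g : F ≃ F)
    (hg : ∀ x y, (g x - g y) ^ (∑ i ∈ Finset.range R, m * p ^ i) =
      (x - y) ^ (∑ i ∈ Finset.range R, m * p ^ i)) :
    ∃ (i : ℕ) (a b : F), ∀ x, g x = x ^ p ^ i * a + b := by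
  classical
  have hR : 0 < R := Nat.pos_of_ne_zero (NeZero.ne R)
  have hrep := exists_poly_comp (R := R) (by omega) hd g hg
  have hpow : ∀ j ≤ m, ∃ Q : MvPolynomial (Fin R) F, (∀ i, Q.degreeOf i ≤ m) ∧
      ∀ x, MvPolynomial.eval (powVec p R x) Q = g x ^ j := by
    intro j hj
    obtain ⟨Q, hQ, hQe⟩ := hrep (fun i => if i = 0 then j else 0) (fun i => by split_ifs <;> omega)
    refine ⟨Q, hQ, fun x => ?_⟩
    rw [hQe]
    simp [hR]
  obtain ⟨P, hPdeg, hP⟩ := hpow 1 hm1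
  simp only [pow_one] at hP
  have hP0 : P ≠ 0 := by
    rintro rfl
    exact zero_ne_one (g.injective ((hP 0).symm.trans (by simpa using hP 1)))
  have hPpow : ∀ j ≤ m, ∀ i, (P ^ j).degreeOf i ≤ m := by
    intro j
    induction j with
    | zero => intro _ i; simp
    | succ j ih =>
      intro hj
      obtain ⟨Q, hQ, hQe⟩ := hpow (j + 1) hj
      have : P ^ (j + 1) = Q := by
        refine ext_of_eval_powVec hq (fun i => ?_) (fun i => (hQ i).trans_lt (by omega))
          fun x => by rw [map_pow, hP, hQe]
        rw [pow_succ]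
        have h1 := MvPolynomial.degreeOf_mul_le i (P ^ j) P
        have h2 := ih (by omega) i
        have h3 := hPdeg i
        omega
      rw [this]
      exact hQ
  have hP1 : ∀ i, P.degreeOf i ≤ 1 := by
    intro i
    have h := hPpow m le_rfl i
    rw [MvPolynomial.degreeOf_pow_eq _ _ _ hP0] at h
    exact Nat.le_of_mul_le_mul_left (by simpa using h) hm1
  -- With `s = b - a`, the twist of `P` by `s` moves the variable `a` to `b`, so that the product
  -- `P ^ m * Q ^ m`, which represents `g ^ (m + m * p ^ s)`, would have degree `2 * m` in `b`.
  have huniq : ∀ a b, P.degreeOf a ≠ 0 → P.degreeOf b ≠ 0 → a = b := by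
    intro a b ha hb
    by_contra hab
    obtain ⟨Q, hQdeg, hQ⟩ := exists_poly_frobenius hq P (b - a)
    have hs : ((b - a : Fin R) : ℕ) ≠ 0 := by
      rw [Ne, Fin.val_eq_zero_iff, sub_eq_zero]
      exact fun h => hab h.symm
    have hQ0 : Q ≠ 0 := by
      rintro rfl
      have := hQdeg a
      simp at this
      exact ha this.symm
    have hQb : Q.degreeOf b = P.degreeOf a := by
      rw [← hQdeg a]; congr 1; abel
    have hQ1 : ∀ i, Q.degreeOf i ≤ 1 := by
      intro i
      have := hQdeg (i - (b - a))
      rw [sub_add_cancel] at this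
      rw [this]; exact hP1 _
    obtain ⟨T, hT, hTe⟩ := hrep
      (fun i => if i = 0 ∨ i = ((b - a : Fin R) : ℕ) then m else 0)
      (fun i => by split_ifs <;> omega)
    have hTeq : P ^ m * Q ^ m = T := by
      refine ext_of_eval_powVec hq (fun i => ?_) (fun i => (hT i).trans_lt (by omega))
        fun x => ?_
      · rw [MvPolynomial.degreeOf_mul_eq (pow_ne_zero _ hP0) (pow_ne_zero _ hQ0),
          MvPolynomial.degreeOf_pow_eq _ _ _ hP0, MvPolynomial.degreeOf_pow_eq _ _ _ hQ0]
        have h1 := Nat.mul_le_mul_left m (hP1 i)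
        have h2 := Nat.mul_le_mul_left m (hQ1 i)
        omega
      · have hexp : ∑ i ∈ Finset.range R,
            (if i = 0 ∨ i = ((b - a : Fin R) : ℕ) then m else 0) * p ^ i =
            m + p ^ ((b - a : Fin R) : ℕ) * m := by
          have h1 : ∀ i ∈ Finset.range R,
              (if i = 0 ∨ i = ((b - a : Fin R) : ℕ) then m else 0) * p ^ i =
              (if i = 0 then m else 0) +
                if i = ((b - a : Fin R) : ℕ) then p ^ ((b - a : Fin R) : ℕ) * m else 0 := by
            intro i _
            by_cases h0 : i = 0
            · subst h0; simp [hs.symm]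
            · by_cases h1 : i = ((b - a : Fin R) : ℕ)
              · rw [if_pos (Or.inr h1), if_neg h0, if_pos h1, h1]; ring
              · simp [h0, h1]
          rw [Finset.sum_congr rfl h1, Finset.sum_add_distrib]
          simp [hR]
        rw [hTe, hexp, map_mul, map_pow, map_pow, hQ, hP, pow_add, pow_mul]
    have hb' := hT b
    rw [← hTeq, MvPolynomial.degreeOf_mul_eq (pow_ne_zero _ hP0) (pow_ne_zero _ hQ0),
      MvPolynomial.degreeOf_pow_eq _ _ _ hP0, MvPolynomial.degreeOf_pow_eq _ _ _ hQ0, hQb] at hb'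
    have h1 := Nat.mul_le_mul_left m (Nat.one_le_iff_ne_zero.2 ha)
    have h2 := Nat.mul_le_mul_left m (Nat.one_le_iff_ne_zero.2 hb)
    omega
  obtain ⟨i, hi⟩ : ∃ i : Fin R, ∀ j, j ≠ i → P.degreeOf j = 0 := by
    by_cases h : ∃ i, P.degreeOf i ≠ 0
    · obtain ⟨i, hi⟩ := h
      exact ⟨i, fun j hj => by_contra fun h => hj (huniq j i h hi)⟩
    · push Not at h
      exact ⟨0, fun j _ => h j⟩
  refine ⟨i, P.coeff (Finsupp.single i 1), P.coeff 0, fun x => ?_⟩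
  have hsub : P.support ⊆ {Finsupp.single i 1, 0} := by
    intro e he
    have hle := fun j => MvPolynomial.monomial_le_degreeOf j he
    have hei : e = Finsupp.single i (e i) := by
      ext j
      rcases eq_or_ne j i with rfl | hj
      · simp
      · have := hle j
        rw [hi j hj] at this
        simp only [Finsupp.single_apply, if_neg hj.symm]
        omega
    have h1 := (hle i).trans (hP1 i)
    rw [hei]
    interval_cases e i <;> simp
  rw [← hP, eval_powVec, Finset.sum_subset hsub, Finset.sum_pair (by simp)]
  · simp only [digitSum, Finsupp.single_apply]
    simp [mul_comm]
  · intro e _ he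
    rw [MvPolynomial.notMem_support_iff.1 he, zero_mul]

/-! ### The automorphisms of the graph -/

/-- The unit group is cyclic, so its subgroup of order `d` is the set of all solutions of `u ^ d = 1`. -/
theorem mem_unitsSet_iff {F : Type*} [Field F] [Fintype F] {d : ℕ} (hd : 0 < d)
    (S : Subgroup Fˣ) (hS : Nat.card S = d) (z : F) : z ∈ unitsSet S ↔ z ^ d = 1 := by
  classical
  have hSpow : ∀ u ∈ S, u ^ d = 1 := by
    intro u hu
    have h : (⟨u, hu⟩ : S) ^ d = 1 := by rw [← hS, pow_card_eq_one']
    simpa using congrArg Subtype.val h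
  have hsub : (S : Set Fˣ).toFinset ⊆ ({u : Fˣ | u ^ d = 1} : Finset Fˣ) := by
    intro u hu
    simpa using hSpow u (by simpa using hu)
  have hcard : (S : Set Fˣ).toFinset.card = d := by
    rw [Set.toFinset_card, ← Nat.card_eq_fintype_card]
    exact hS
  have heq := Finset.eq_of_subset_of_card_le hsub
    (by rw [hcard]; exact IsCyclic.card_pow_eq_one_le hd)
  constructor
  · rintro ⟨u, hu, rfl⟩
    have := hSpow u hu
    simpa using congrArg Units.val this
  · intro hz
    have hz0 : z ≠ 0 := by
      rintro rfl
      simp [hd.ne'] at hz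
    refine ⟨Units.mk0 z hz0, ?_, rfl⟩
    have : Units.mk0 z hz0 ∈ (S : Set Fˣ).toFinset := by
      rw [heq]
      simp [Units.ext_iff, hz]
    simpa using this

/-- If `k ∣ p - 1`, then every graph automorphism of `Γ = GPaley(q,(q-1)/k)` has the form
`x ↦ φ(x)·s + c` for a field automorphism `φ` of `F`, some `s ∈ S` and some `c ∈ F`. -/
theorem gpaley_aut_semilinear {F : Type*} [Field F] [Fintype F]
    (p R k : ℕ) (hp : p.Prime) (hR : 1 ≤ R) (hq : Fintype.card F = p ^ R)
    (hk : k ∣ p ^ R - 1) (hk2 : 2 ≤ k)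
    (heven : Even (p ^ R) ∨ Even ((p ^ R - 1) / k))
    (S : Subgroup Fˣ) (hS : Nat.card S = (p ^ R - 1) / k)
    (hkp : k ∣ p - 1)
    (g : gpaley (unitsSet S) ≃g gpaley (unitsSet S)) :
    ∃ (φ : F ≃+* F) (s c : F), s ∈ unitsSet S ∧ ∀ x : F, g x = φ x * s + c := by
  have : Fact p.Prime := ⟨hp⟩
  have : NeZero R := ⟨by omega⟩
  have : CharP F p := charP_of_card_eq_prime_pow hq
  obtain ⟨m, hm⟩ := hkp
  have hp2 := hp.two_le
  have hm1 : 1 ≤ m := Nat.pos_of_ne_zero fun h => by simp [h] at hm; omega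
  have hmk : 2 * m ≤ k * m := Nat.mul_le_mul_right m hk2
  have hdk : (∑ i ∈ Finset.range R, m * p ^ i) * k = Fintype.card F - 1 := by
    have hgeom : (∑ i ∈ Finset.range R, p ^ i) * (p - 1) = p ^ R - 1 := by
      rw [Nat.geomSum_eq hp2, Nat.div_mul_cancel (by simpa using Nat.sub_dvd_pow_sub_pow p 1 R)]
    rw [hq, ← hgeom, hm, ← Finset.mul_sum]
    ring
  have hdq : (p ^ R - 1) / k = ∑ i ∈ Finset.range R, m * p ^ i := by
    rw [← hq, ← hdk, Nat.mul_div_cancel _ (by omega)]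
  have hch : ∀ a, 1 ≤ a → a < k →
      (((∑ i ∈ Finset.range R, m * p ^ i) * a).choose (∑ i ∈ Finset.range R, m * p ^ i) : F) ≠ 0 := by
    intro a ha hak
    rw [Ne, CharP.cast_eq_zero_iff F p]
    have h1 : m * a ≤ k * m := by rw [mul_comm k]; exact Nat.mul_le_mul_left m hak.le
    have h := not_dvd_choose_digits hp (c := m * a) (by omega) R (fun _ => m)
      (fun _ => Nat.le_mul_of_pos_right m ha)
    rwa [Finset.sum_mul, Finset.sum_congr rfl fun i _ => mul_right_comm m (p ^ i) a]
  have hcard : 1 < Fintype.card F := Fintype.one_lt_card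
  rw [hdq] at hS heven
  have hd0 : 0 < ∑ i ∈ Finset.range R, m * p ^ i := Nat.pos_of_ne_zero fun h => by
    rw [h, zero_mul] at hdk; omega
  have hdlt : ∑ i ∈ Finset.range R, m * p ^ i < Fintype.card F - 1 := by
    rw [← hdk]; exact lt_mul_of_one_lt_right hd0 (by omega)
  have hpodd : Odd p := hp.odd_of_ne_two (by omega)
  have hdeven : Even (∑ i ∈ Finset.range R, m * p ^ i) :=
    heven.resolve_left (Nat.not_even_iff_odd.2 hpodd.pow)
  have hmem := mem_unitsSet_iff hd0 S hS
  have hadj : ∀ x y, (gpaley (unitsSet S)).Adj x y ↔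
      (x - y) ^ (∑ i ∈ Finset.range R, m * p ^ i) = 1 := by
    intro x y
    rw [gpaley, SimpleGraph.fromRel_adj, hmem, hmem, ← neg_sub x y, hdeven.neg_pow, or_self]
    refine ⟨fun h => h.2, fun h => ⟨?_, h⟩⟩
    rintro rfl
    rw [sub_self, zero_pow hd0.ne'] at h
    exact zero_ne_one h
  have hg : ∀ x y, (g.toEquiv x - g.toEquiv y) ^ (∑ i ∈ Finset.range R, m * p ^ i) = 1 ↔
      (x - y) ^ (∑ i ∈ Finset.range R, m * p ^ i) = 1 := fun x y => by
    rw [← hadj, ← hadj]; exact g.map_adj_iff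
  have hinv := pow_sub_invariant hdk hk2 hch g.toEquiv hg
  obtain ⟨i, a, b, hform⟩ := exists_frobenius_form hq hm1 (by omega) hdlt g.toEquiv hinv
  refine ⟨iterateFrobeniusEquiv F p i, a, b, ?_, hform⟩
  have h := hinv 1 0
  rw [hform 1, hform 0, zero_pow (pow_ne_zero _ hp.ne_zero)] at h
  rw [hmem]
  simpa using h
end

section
/- Let q = p^R with p prime and let k be a divisor of q-1 with k ≥ 3 and k ∣ (p-1) (and q even or (q-1)/k even). Then p ≥ 5, and for every proper divisor a of R one has (q-1)/(p^a-1) > p > k; consequently Γ = GPaley(q,(q-1)/k) is connected. -/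
lemma gpaley_reachable_add {F : Type*} [Field F] (S : Set F) {h : F}
    (hh : h ∈ AddSubgroup.closure S) : ∀ y : F, (gpaley S).Reachable y (y + h) := by
  induction hh using AddSubgroup.closure_induction with
  | mem s hs =>
    intro y
    by_cases h0 : s = 0
    · subst h0
      simp
    · apply SimpleGraph.Adj.reachable
      rw [gpaley, SimpleGraph.fromRel_adj]
      refine ⟨by simpa using h0, Or.inr ?_⟩
      simpa using hs
  | zero => intro y; simp
  | add a b _ _ iha ihb =>
    intro y
    rw [← add_assoc]
    exact (iha y).trans (ihb (y + a))
  | neg a _ iha =>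
    intro y
    simpa using (iha (y + -a)).symm

lemma gpaley_connected_of_closure_eq_top {F : Type*} [Field F] (S : Set F)
    (hS : AddSubgroup.closure S = ⊤) : (gpaley S).Connected := by
  refine ⟨fun x y => ?_⟩
  have hxy : y - x ∈ AddSubgroup.closure S := by rw [hS]; trivial
  simpa using gpaley_reachable_add S hxy x

lemma natCard_lt_card_closure_unitsSet {F : Type*} [Field F] [Finite F] (S : Subgroup Fˣ) :
    Nat.card S < Nat.card (AddSubgroup.closure (unitsSet S)) := by
  have h1 : Nat.card S = (unitsSet S).ncard := by
    rw [unitsSet, Set.ncard_image_of_injective _ Units.val_injective]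
    rfl
  rw [h1]
  refine Set.ncard_lt_ncard (t := (AddSubgroup.closure (unitsSet S) : Set F)) ?_ (Set.toFinite _)
  refine ⟨AddSubgroup.subset_closure, fun h => ?_⟩
  obtain ⟨u, -, hu⟩ := h (AddSubgroup.closure (unitsSet S)).zero_mem
  exact u.ne_zero hu

lemma pow_pred_le_div {p R k : ℕ} (hp : 0 < p) (hR : 1 ≤ R) (hk0 : 0 < k) (hkp : k ≤ p - 1) :
    p ^ (R - 1) ≤ (p ^ R - 1) / k := by
  rw [Nat.le_div_iff_mul_le hk0]
  have h1 : p ^ R = p ^ (R - 1) * (p - 1) + p ^ (R - 1) := by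
    obtain ⟨r, rfl⟩ := Nat.exists_eq_add_of_le' hR
    obtain ⟨n, rfl⟩ := Nat.exists_eq_add_of_le' hp
    simp only [Nat.add_sub_cancel]
    ring
  have h2 : 0 < p ^ (R - 1) := by positivity
  have h3 : p ^ (R - 1) * k ≤ p ^ (R - 1) * (p - 1) := Nat.mul_le_mul_left _ hkp
  omega

lemma lt_div_of_proper_dvd {p R a : ℕ} (hp : 2 ≤ p) (ha : a ∣ R) (ha1 : 1 ≤ a) (haR : a < R) :
    p < (p ^ R - 1) / (p ^ a - 1) := by
  have h2a : 2 * a ≤ R := by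
    obtain ⟨m, rfl⟩ := ha
    have hm : 2 ≤ m := by
      by_contra hm
      interval_cases m <;> omega
    nlinarith
  have hpa : p ≤ p ^ a := Nat.le_self_pow (by omega) p
  rw [← Nat.succ_le_iff, Nat.le_div_iff_mul_le (by omega)]
  have h1 : p ^ (2 * a) ≤ p ^ R := Nat.pow_le_pow_right (by omega) h2a
  rw [two_mul, pow_add] at h1
  generalize p ^ a = x at *
  obtain ⟨y, rfl⟩ := Nat.exists_eq_add_of_le' (show 1 ≤ x by omega)
  have h2 : (p + 1) * y ≤ (y + 2) * y := Nat.mul_le_mul_right _ (by omega)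
  simp only [Nat.add_sub_cancel, Nat.succ_eq_add_one]
  apply Nat.le_sub_of_add_le
  nlinarith

/-- If `k ≥ 3` and `k ∣ p - 1`, then `p ≥ 5`, for every proper divisor `a` of `R` one has
`(q-1)/(pᵃ-1) > p > k`, and consequently `Γ = GPaley(q,(q-1)/k)` is connected. -/
theorem gpaley_connected_of_dvd_p_sub_one {F : Type*} [Field F] [Fintype F]
    (p R k : ℕ) (hp : p.Prime) (hR : 1 ≤ R) (hq : Fintype.card F = p ^ R)
    (hk : k ∣ p ^ R - 1) (hk3 : 3 ≤ k)
    (heven : Even (p ^ R) ∨ Even ((p ^ R - 1) / k))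
    (hkp : k ∣ p - 1)
    (S : Subgroup Fˣ) (hS : Nat.card S = (p ^ R - 1) / k) :
    5 ≤ p ∧
      (∀ a : ℕ, a ∣ R → 1 ≤ a → a < R → k < p ∧ p < (p ^ R - 1) / (p ^ a - 1)) ∧
      (gpaley (unitsSet S)).Connected := by
  have hp2 := hp.two_le
  have hkle : k ≤ p - 1 := Nat.le_of_dvd (by omega) hkp
  refine ⟨?_, fun a ha ha1 haR => ⟨by omega, lt_div_of_proper_dvd hp2 ha ha1 haR⟩, ?_⟩
  · have h4 : p ≠ 4 := by
      rintro rfl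
      norm_num at hp
    omega
  · apply gpaley_connected_of_closure_eq_top
    have hlt := natCard_lt_card_closure_unitsSet S
    have hle := pow_pred_le_div hp.pos hR (by omega) hkle
    have hdvd : Nat.card (AddSubgroup.closure (unitsSet S)) ∣ p ^ R := by
      rw [← hq, ← Nat.card_eq_fintype_card]
      exact AddSubgroup.card_addSubgroup_dvd_card _
    obtain ⟨j, hj, hcard⟩ := (Nat.dvd_prime_pow hp).1 hdvd
    have hjR : R - 1 < j := by
      rw [← Nat.pow_lt_pow_iff_right (a := p) (by omega)]
      omega
    obtain rfl : j = R := by omega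
    apply AddSubgroup.eq_top_of_card_eq
    rw [hcard, Nat.card_eq_fintype_card, hq]
end

section
/- Let p ≥ 5 be a prime, let R = ab with a ≥ 1 and b > 1, and let k be an integer with 3 ≤ k ≤ p-1 and k ∣ (p-1). Then k ≠ (p^R-1)/(b(p^a-1)). (Indeed k = (p^R-1)/(b(p^a-1)) would force b = 2, a = 1 and k = (p+1)/2, which is incompatible with k ∣ (p-1).) -/
/-!
Put `q = p ^ a` and suppose `k * b * (q - 1) = q ^ b - 1`. Since `k ∣ p - 1 ∣ q - 1`, also
`k ≤ q - 1`. For `b = 2` cancelling `q - 1` gives `2 * k = q + 1`, so `k` divides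
`(q + 1) - (q - 1) = 2`, contradicting `3 ≤ k`. For `b ≥ 3` sizes do not match:
`q ^ b ≥ b * q ^ 2`, whereas `k * b * (q - 1) ≤ b * (q - 1) ^ 2`.
-/

theorem add_three_le_pow_succ (q c : ℕ) (hq : 5 ≤ q) : c + 3 ≤ q ^ (c + 1) := by
  induction c with
  | zero => simpa using by omega
  | succ n ih =>
    rw [pow_succ]
    nlinarith

/-- Arithmetic fact: if `p ≥ 5` is prime, `R = a·b` with `a ≥ 1`, `b > 1`, and
`3 ≤ k ≤ p - 1` with `k ∣ p - 1`, then `k ≠ (pᴿ-1)/(b(pᵃ-1))`, i.e.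
`k·b·(pᵃ-1) ≠ pᴿ-1`. -/
theorem not_hamming_parameter (p R a b k : ℕ) (hp : p.Prime) (hp5 : 5 ≤ p)
    (ha : 1 ≤ a) (hb : 1 < b) (hR : R = a * b)
    (hk3 : 3 ≤ k) (hkp1 : k ≤ p - 1) (hkp : k ∣ p - 1) :
    k * (b * (p ^ a - 1)) ≠ p ^ R - 1 := by
  subst hR
  rw [pow_mul]
  have hdvd : k ∣ p ^ a - 1 := hkp.trans (by simpa using Nat.sub_dvd_pow_sub_pow p 1 a)
  have hq5 : 5 ≤ p ^ a := hp5.trans (Nat.le_self_pow (by omega) p)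
  generalize p ^ a = q at *
  obtain ⟨m, rfl⟩ : ∃ m, q = m + 1 := ⟨q - 1, by omega⟩
  simp only [Nat.add_sub_cancel] at *
  have hkm : k ≤ m := Nat.le_of_dvd (by omega) hdvd
  intro h
  obtain rfl | hb3 : b = 2 ∨ 3 ≤ b := by omega
  · have h1 : (m + 1) ^ 2 - 1 = m * (m + 2) := by
      have : (m + 1) ^ 2 = m * (m + 2) + 1 := by ring
      omega
    have h2 : k * 2 = m + 2 := by
      apply Nat.eq_of_mul_eq_mul_left (show 0 < m by omega)
      linarith
    have h3 : k ∣ 2 := (Nat.dvd_add_right hdvd).1 (h2 ▸ Dvd.intro _ rfl)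
    have := Nat.le_of_dvd (by omega) h3
    omega
  · obtain ⟨c, rfl⟩ : ∃ c, b = c + 3 := ⟨b - 3, by omega⟩
    have h1 : (c + 3) * (m + 1) ^ 2 ≤ (m + 1) ^ (c + 3) := by
      rw [show c + 3 = (c + 1) + 2 by ring, pow_add]
      exact Nat.mul_le_mul_right _ (add_three_le_pow_succ _ c hq5)
    have h2 : k * ((c + 3) * m) ≤ m * ((c + 3) * m) := Nat.mul_le_mul_right _ hkm
    have h3 : m * ((c + 3) * m) + 1 < (c + 3) * (m + 1) ^ 2 := by nlinarith
    omega
end
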